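/- The Poincaré polynomial of the complex Grassmannian G(k,n) is q^{nk-k²}·[n choose k], where [n choose k] is the Gaussian binomial coefficient in the variable q (with quantum integers [m] = q^{m-1}+q^{m-3}+···+q^{1-m}); equivalently, the sum over d of dim H_d(G(k,n);ℚ)·q^d equals q^{nk-k²}·[n]!/([k]![n-k]!). -/

import Mathlib

open CategoryTheory

noncomputable section

/-- The singular chain complex of a topological space with coefficients in a commutative ring. -/
def singularComplex (R : Type) [CommRing R] (X : Type) [TopologicalSpace X] :
    ChainComplex (ModuleCat R) ℕ :=
  (AlgebraicTopology.alternatingFaceMapComplex (ModuleCat R)).obj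
    (((SimplicialObject.whiskering _ _).obj (ModuleCat.free R)).obj
      (TopCat.toSSet.obj (TopCat.of X)))

/-- Singular homology of `X` with coefficients in `R`. -/
def singularHomology (R : Type) [CommRing R] (X : Type) [TopologicalSpace X] (d : ℕ) :
    ModuleCat R :=
  (singularComplex R X).homology d

/-- The `d`-th Betti number: the dimension of `d`-th rational singular homology. -/
def betti (X : Type) [TopologicalSpace X] (d : ℕ) : ℕ :=
  Module.finrank ℚ (singularHomology ℚ X d)

/-- `X` has (rational) Euler characteristic `m`: its Betti numbers vanish from some point on,
and the alternating sum of the Betti numbers equals `m`. -/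
def eulerCharEq (X : Type) [TopologicalSpace X] (m : ℤ) : Prop :=
  ∃ M : ℕ, (∀ d ≥ M, betti X d = 0) ∧
    (∑ d ∈ Finset.range M, (-1 : ℤ) ^ d * betti X d) = m

/-- The complex Grassmannian `G(k,n)` of `k`-dimensional subspaces of `ℂ^n`, realized as the
space of rank-`k` orthogonal projection matrices, with the subspace topology. -/
def Gr (k n : ℕ) : Type :=
  {P : Matrix (Fin n) (Fin n) ℂ // P * P = P ∧ P.conjTranspose = P ∧ P.trace = (k : ℂ)}

instance (k n : ℕ) : TopologicalSpace (Gr k n) :=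
  inferInstanceAs (TopologicalSpace
    {P : Matrix (Fin n) (Fin n) ℂ // P * P = P ∧ P.conjTranspose = P ∧ P.trace = (k : ℂ)})


/-- The quantum integer `[k] = q^(k-1) + q^(k-3) + ⋯ + q^(1-k)`. -/
def qint (k : ℕ) (q : ℝ) : ℝ := ∑ m ∈ Finset.range k, q ^ ((k : ℤ) - 1 - 2 * m)

/-- The quantum factorial `[k]! = [k][k-1]⋯[1]`. -/
def qfact (k : ℕ) (q : ℝ) : ℝ := ∏ m ∈ Finset.range k, qint (m + 1) q

/-- The Gaussian (quantum) binomial coefficient `[i choose j] = [i]!/([j]![i-j]!)`. -/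
def qbinom (i j : ℕ) (q : ℝ) : ℝ := qfact i q / (qfact j q * qfact (i - j) q)

/-- `p` is the Poincaré polynomial of `X`: the Betti numbers of `X` vanish from some point on,
and for every nonzero `q`, `p q = Σ_d dim H_d(X;ℚ) q^d`. -/
def IsPoincarePoly (X : Type) [TopologicalSpace X] (p : ℝ → ℝ) : Prop :=
  ∃ M : ℕ, (∀ d ≥ M, betti X d = 0) ∧
    ∀ q : ℝ, q ≠ 0 → p q = ∑ d ∈ Finset.range M, (betti X d : ℝ) * q ^ d

namespace VertexChain

variable {W W' : Type*}

/-- The boundary of a formal chain of simplices given by their vertices. -/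
def bd (W : Type*) (m : ℕ) : ((Fin (m + 2) → W) →₀ ℚ) →ₗ[ℚ] ((Fin (m + 1) → W) →₀ ℚ) :=
  Finsupp.linearCombination ℚ fun v =>
    ∑ i : Fin (m + 2), (-1 : ℚ) ^ (i : ℕ) • Finsupp.single (v ∘ i.succAbove) 1

/-- The join of a formal chain with an apex. -/
def cone (b : W) (m : ℕ) : ((Fin (m + 1) → W) →₀ ℚ) →ₗ[ℚ] ((Fin (m + 2) → W) →₀ ℚ) :=
  Finsupp.lmapDomain ℚ ℚ fun v => (Fin.cons b v : Fin (m + 2) → W)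

/-- The map on formal chains induced by a map on vertices. -/
def push (g : W → W') (m : ℕ) : ((Fin (m + 1) → W) →₀ ℚ) →ₗ[ℚ] ((Fin (m + 1) → W') →₀ ℚ) :=
  Finsupp.lmapDomain ℚ ℚ fun v => g ∘ v

lemma bd_single (m : ℕ) (v : Fin (m + 2) → W) :
    bd W m (Finsupp.single v 1) =
      ∑ i : Fin (m + 2), (-1 : ℚ) ^ (i : ℕ) • Finsupp.single (v ∘ i.succAbove) 1 := by
  simp [bd]

lemma cone_single (b : W) (m : ℕ) (v : Fin (m + 1) → W) (c : ℚ) :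
    cone b m (Finsupp.single v c) = Finsupp.single (Fin.cons b v : Fin (m + 2) → W) c := by
  simp [cone]

lemma push_single (g : W → W') (m : ℕ) (v : Fin (m + 1) → W) (c : ℚ) :
    push g m (Finsupp.single v c) = Finsupp.single (g ∘ v) c := by
  simp [push]

lemma cons_comp_succAbove_succ (b : W) {m : ℕ} (v : Fin (m + 2) → W) (i : Fin (m + 2)) :
    (Fin.cons b v : Fin (m + 3) → W) ∘ i.succ.succAbove =
      (Fin.cons b (v ∘ i.succAbove) : Fin (m + 2) → W) := by
  funext j
  refine Fin.cases ?_ (fun j => ?_) j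
  · simp
  · simp [Fin.succ_succAbove_succ]

lemma bd_cone (b : W) (m : ℕ) (x : (Fin (m + 2) → W) →₀ ℚ) :
    bd W (m + 1) (cone b (m + 1) x) = x - cone b m (bd W m x) := by
  suffices h : bd W (m + 1) ∘ₗ cone b (m + 1) = LinearMap.id - cone b m ∘ₗ bd W m from
    LinearMap.congr_fun h x
  refine Finsupp.lhom_ext' fun v => LinearMap.ext_ring ?_
  simp only [LinearMap.comp_apply, Finsupp.lsingle_apply, cone_single, bd_single,
    LinearMap.sub_apply, LinearMap.id_apply, map_sum, map_smul]
  rw [Fin.sum_univ_succ, sub_eq_add_neg, ← Finset.sum_neg_distrib]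
  congr 1
  · simp only [Fin.val_zero, pow_zero, one_smul]
    congr 1
  · refine Finset.sum_congr rfl fun i _ => ?_
    rw [cons_comp_succAbove_succ, Fin.val_succ, pow_succ]
    simp

lemma bd_cone_zero (b : W) (v : Fin 1 → W) :
    bd W 0 (cone b 0 (Finsupp.single v 1)) =
      Finsupp.single v 1 - Finsupp.single (fun _ => b) 1 := by
  rw [cone_single, bd_single, Fin.sum_univ_two]
  simp only [Fin.val_zero, pow_zero, one_smul, Fin.val_one, pow_one, neg_smul, sub_eq_add_neg]
  have h : (Fin.cons b v : Fin 2 → W) ∘ Fin.succAbove (1 : Fin 2) = fun _ => b := by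
    funext j
    fin_cases j
    rfl
  rw [h]
  rfl

lemma bd_cone_bd_zero (b : W) (x : (Fin 2 → W) →₀ ℚ) :
    bd W 0 (cone b 0 (bd W 0 x)) = bd W 0 x := by
  suffices h : bd W 0 ∘ₗ cone b 0 ∘ₗ bd W 0 = bd W 0 from LinearMap.congr_fun h x
  refine Finsupp.lhom_ext' fun v => LinearMap.ext_ring ?_
  simp only [LinearMap.comp_apply, Finsupp.lsingle_apply]
  rw [bd_single, Fin.sum_univ_two]
  simp only [Fin.val_zero, pow_zero, one_smul, Fin.val_one, pow_one, neg_smul, map_add, map_neg,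
    bd_cone_zero]
  abel

lemma bd_bd (m : ℕ) (x : (Fin (m + 3) → W) →₀ ℚ) : bd W m (bd W (m + 1) x) = 0 := by
  induction m with
  | zero =>
    suffices h : bd W 0 ∘ₗ bd W 1 = 0 from LinearMap.congr_fun h x
    refine Finsupp.lhom_ext' fun v => LinearMap.ext_ring ?_
    simp only [LinearMap.comp_apply, Finsupp.lsingle_apply, LinearMap.zero_apply]
    rw [← Fin.cons_self_tail v, ← cone_single, bd_cone, map_sub, bd_cone_bd_zero, sub_self]
  | succ m ih =>
    suffices h : bd W (m + 1) ∘ₗ bd W (m + 2) = 0 from LinearMap.congr_fun h x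
    refine Finsupp.lhom_ext' fun v => LinearMap.ext_ring ?_
    simp only [LinearMap.comp_apply, Finsupp.lsingle_apply, LinearMap.zero_apply]
    rw [← Fin.cons_self_tail v, ← cone_single, bd_cone, map_sub, bd_cone, ih, map_zero, sub_zero,
      sub_self]

/-- Barycentric subdivision of formal chains, for a chosen barycentre of every vertex tuple. -/
def subdiv (β : ∀ m : ℕ, (Fin (m + 1) → W) → W) :
    ∀ m : ℕ, ((Fin (m + 1) → W) →₀ ℚ) →ₗ[ℚ] ((Fin (m + 1) → W) →₀ ℚ)
  | 0 => LinearMap.id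
  | m + 1 => Finsupp.linearCombination ℚ fun v =>
      cone (β (m + 1) v) m (subdiv β m (bd W m (Finsupp.single v 1)))

/-- The chain homotopy between the identity and barycentric subdivision. -/
def subdivHomotopy (β : ∀ m : ℕ, (Fin (m + 1) → W) → W) :
    ∀ m : ℕ, ((Fin (m + 1) → W) →₀ ℚ) →ₗ[ℚ] ((Fin (m + 2) → W) →₀ ℚ)
  | 0 => 0
  | m + 1 => Finsupp.linearCombination ℚ fun v =>
      cone (β (m + 1) v) (m + 1)
        (Finsupp.single v 1 - subdivHomotopy β m (bd W m (Finsupp.single v 1)))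

variable (β : ∀ m : ℕ, (Fin (m + 1) → W) → W)

lemma subdiv_single (m : ℕ) (v : Fin (m + 2) → W) :
    subdiv β (m + 1) (Finsupp.single v 1) =
      cone (β (m + 1) v) m (subdiv β m (bd W m (Finsupp.single v 1))) := by
  simp [subdiv]

lemma subdivHomotopy_single (m : ℕ) (v : Fin (m + 2) → W) :
    subdivHomotopy β (m + 1) (Finsupp.single v 1) =
      cone (β (m + 1) v) (m + 1)
        (Finsupp.single v 1 - subdivHomotopy β m (bd W m (Finsupp.single v 1))) := by
  simp [subdivHomotopy]

lemma bd_subdiv (m : ℕ) (x : (Fin (m + 2) → W) →₀ ℚ) :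
    bd W m (subdiv β (m + 1) x) = subdiv β m (bd W m x) := by
  suffices h : bd W m ∘ₗ subdiv β (m + 1) = subdiv β m ∘ₗ bd W m from LinearMap.congr_fun h x
  clear x
  induction m with
  | zero =>
    refine Finsupp.lhom_ext' fun v => LinearMap.ext_ring ?_
    simp only [LinearMap.comp_apply, Finsupp.lsingle_apply, subdiv_single]
    exact bd_cone_bd_zero _ _
  | succ m ih =>
    refine Finsupp.lhom_ext' fun v => LinearMap.ext_ring ?_
    have hm := LinearMap.congr_fun ih (bd W (m + 1) (Finsupp.single v 1))
    simp only [LinearMap.comp_apply, bd_bd, map_zero] at hm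
    simp only [LinearMap.comp_apply, Finsupp.lsingle_apply, subdiv_single]
    rw [bd_cone, hm, map_zero, sub_zero]

lemma bd_subdivHomotopy_zero (x : (Fin 1 → W) →₀ ℚ) :
    bd W 0 (subdivHomotopy β 0 x) = x - subdiv β 0 x := by
  simp [subdivHomotopy, subdiv]

lemma bd_subdivHomotopy (m : ℕ) (x : (Fin (m + 2) → W) →₀ ℚ) :
    bd W (m + 1) (subdivHomotopy β (m + 1) x) + subdivHomotopy β m (bd W m x) =
      x - subdiv β (m + 1) x := by
  suffices h : bd W (m + 1) ∘ₗ subdivHomotopy β (m + 1) + subdivHomotopy β m ∘ₗ bd W m =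
      LinearMap.id - subdiv β (m + 1) from LinearMap.congr_fun h x
  clear x
  induction m with
  | zero =>
    refine Finsupp.lhom_ext' fun v => LinearMap.ext_ring ?_
    simp only [LinearMap.comp_apply, LinearMap.add_apply, LinearMap.sub_apply, LinearMap.id_apply,
      Finsupp.lsingle_apply, subdivHomotopy_single, subdiv_single, bd_cone]
    simp [subdivHomotopy, subdiv]
  | succ m ih =>
    refine Finsupp.lhom_ext' fun v => LinearMap.ext_ring ?_
    have hm := LinearMap.congr_fun ih
      (bd W (m + 1) (Finsupp.single v 1))
    simp only [LinearMap.comp_apply, LinearMap.add_apply, LinearMap.sub_apply, LinearMap.id_apply,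
      bd_bd, map_zero, add_zero] at hm
    simp only [LinearMap.comp_apply, LinearMap.add_apply, LinearMap.sub_apply, LinearMap.id_apply,
      Finsupp.lsingle_apply, subdivHomotopy_single, subdiv_single, bd_cone, map_sub, hm]
    abel

section Naturality

variable {β} {β' : ∀ m : ℕ, (Fin (m + 1) → W') → W'} {g : W → W'}

lemma push_bd (m : ℕ) (x : (Fin (m + 2) → W) →₀ ℚ) :
    push g m (bd W m x) = bd W' m (push g (m + 1) x) := by
  suffices h : push g m ∘ₗ bd W m = bd W' m ∘ₗ push g (m + 1) from LinearMap.congr_fun h x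
  refine Finsupp.lhom_ext' fun v => LinearMap.ext_ring ?_
  simp [bd_single, push_single, Function.comp_assoc]

lemma push_cone (b : W) (m : ℕ) (x : (Fin (m + 1) → W) →₀ ℚ) :
    push g (m + 1) (cone b m x) = cone (g b) m (push g m x) := by
  suffices h : push g (m + 1) ∘ₗ cone b m = cone (g b) m ∘ₗ push g m from LinearMap.congr_fun h x
  refine Finsupp.lhom_ext' fun v => LinearMap.ext_ring ?_
  simp [cone_single, push_single, Fin.comp_cons]

lemma push_subdiv (hg : ∀ m v, g (β m v) = β' m (g ∘ v)) (m : ℕ) (x : (Fin (m + 1) → W) →₀ ℚ) :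
    push g m (subdiv β m x) = subdiv β' m (push g m x) := by
  suffices h : push g m ∘ₗ subdiv β m = subdiv β' m ∘ₗ push g m from LinearMap.congr_fun h x
  clear x
  induction m with
  | zero => rfl
  | succ m ih =>
    refine Finsupp.lhom_ext' fun v => LinearMap.ext_ring ?_
    have := LinearMap.congr_fun ih (bd W m (Finsupp.single v 1))
    simp only [LinearMap.comp_apply, push_bd] at this
    simp only [LinearMap.comp_apply, Finsupp.lsingle_apply, subdiv_single, push_cone, this, hg,
      push_single]

lemma push_subdivHomotopy (hg : ∀ m v, g (β m v) = β' m (g ∘ v)) (m : ℕ)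
    (x : (Fin (m + 1) → W) →₀ ℚ) :
    push g (m + 1) (subdivHomotopy β m x) = subdivHomotopy β' m (push g m x) := by
  suffices h : push g (m + 1) ∘ₗ subdivHomotopy β m = subdivHomotopy β' m ∘ₗ push g m from
    LinearMap.congr_fun h x
  clear x
  induction m with
  | zero => simp [subdivHomotopy]
  | succ m ih =>
    refine Finsupp.lhom_ext' fun v => LinearMap.ext_ring ?_
    have := LinearMap.congr_fun ih (bd W m (Finsupp.single v 1))
    simp only [LinearMap.comp_apply, push_bd] at this
    simp only [LinearMap.comp_apply, Finsupp.lsingle_apply, subdivHomotopy_single, push_cone,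
      map_sub, this, hg, push_single]

end Naturality

end VertexChain

namespace VertexChain

lemma mem_of_mem_supported {α M : Type*} [AddCommGroup M] [Module ℚ M] {s : Set α}
    (f : (α →₀ ℚ) →ₗ[ℚ] M) (p : Submodule ℚ M) (h : ∀ a ∈ s, f (Finsupp.single a 1) ∈ p)
    {x : α →₀ ℚ} (hx : x ∈ Finsupp.supported ℚ ℚ s) : f x ∈ p := by
  rw [Finsupp.supported_eq_span_single] at hx
  suffices h' : Submodule.span ℚ ((fun a => Finsupp.single a (1 : ℚ)) '' s) ≤ p.comap f from h' hx
  rw [Submodule.span_le]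
  rintro _ ⟨a, ha, rfl⟩
  exact h a ha

lemma single_mem_supported {α : Type*} {s : Set α} {a : α} (c : ℚ) (h : a ∈ s) :
    Finsupp.single a c ∈ Finsupp.supported ℚ ℚ s :=
  Finsupp.single_mem_supported ℚ c h

variable {W : Type*} [PseudoMetricSpace W] {β : ∀ m : ℕ, (Fin (m + 1) → W) → W}

lemma subdiv_single_mem_supported
    (hball : ∀ m v c r, (∀ i, dist (v i) c ≤ r) → dist (β m v) c ≤ r)
    (hmesh : ∀ (m : ℕ) v D, (∀ i j, dist (v i) (v j) ≤ D) →
      ∀ i, dist (β m v) (v i) ≤ m / (m + 1) * D)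
    (m : ℕ) (v : Fin (m + 1) → W) {D : ℝ} (hD : 0 ≤ D) (hv : ∀ i j, dist (v i) (v j) ≤ D) :
    subdiv β m (Finsupp.single v 1) ∈ Finsupp.supported ℚ ℚ
      {w | (∀ c r, (∀ i, dist (v i) c ≤ r) → ∀ j, dist (w j) c ≤ r) ∧
        ∀ i j, dist (w i) (w j) ≤ m / (m + 1) * D} := by
  induction m with
  | zero =>
    refine single_mem_supported _ ⟨fun c r h j => h j, fun i j => ?_⟩
    rw [Subsingleton.elim (α := Fin 1) i j]
    simp
  | succ m ih =>
    rw [subdiv_single, bd_single, map_sum, map_sum]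
    refine Submodule.sum_mem _ fun i _ => ?_
    rw [map_smul, map_smul]
    refine Submodule.smul_mem _ _ ?_
    have hi := ih (v ∘ i.succAbove) fun a b => hv _ _
    refine mem_of_mem_supported (cone (β (m + 1) v) m) _ (fun w hw => ?_) hi
    rw [cone_single]
    have hb := hmesh (m + 1) v D hv
    have hwb : ∀ j, dist (w j) (β (m + 1) v) ≤ ((m + 1 : ℕ) : ℝ) / ((m + 1 : ℕ) + 1) * D :=
      hw.1 _ _ fun a => by rw [dist_comm]; exact hb _
    have hle : (m : ℝ) / (m + 1) ≤ ((m + 1 : ℕ) : ℝ) / ((m + 1 : ℕ) + 1) := by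
      rw [div_le_div_iff₀ (by positivity) (by positivity)]
      push_cast
      nlinarith
    refine single_mem_supported _ ⟨fun c r h => ?_, fun a b => ?_⟩
    · exact Fin.cases (hball _ _ _ _ h) (hw.1 c r fun a => h _)
    · induction a using Fin.cases with
      | zero =>
        induction b using Fin.cases with
        | zero => simp only [Fin.cons_zero, dist_self]; positivity
        | succ b => simpa [dist_comm] using hwb b
      | succ a =>
        induction b using Fin.cases with
        | zero => simpa using hwb a
        | succ b =>
          simpa using (hw.2 a b).trans (mul_le_mul_of_nonneg_right hle hD)

lemma iterate_subdiv_mem_supported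
    (hball : ∀ m v c r, (∀ i, dist (v i) c ≤ r) → dist (β m v) c ≤ r)
    (hmesh : ∀ (m : ℕ) v D, (∀ i j, dist (v i) (v j) ≤ D) →
      ∀ i, dist (β m v) (v i) ≤ m / (m + 1) * D)
    (m : ℕ) (v : Fin (m + 1) → W) {D : ℝ} (hD : 0 ≤ D) (hv : ∀ i j, dist (v i) (v j) ≤ D)
    (k : ℕ) :
    (subdiv β m)^[k] (Finsupp.single v 1) ∈ Finsupp.supported ℚ ℚ
      {w | ∀ i j, dist (w i) (w j) ≤ ((m : ℝ) / (m + 1)) ^ k * D} := by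
  induction k with
  | zero => exact single_mem_supported _ (by simpa using hv)
  | succ k ih =>
    rw [Function.iterate_succ_apply']
    refine mem_of_mem_supported _ _ (fun w hw => ?_) ih
    refine Finsupp.supported_mono (fun u hu => ?_)
      (subdiv_single_mem_supported hball hmesh m w (by positivity) hw)
    simpa [pow_succ', mul_assoc] using hu.2

end VertexChain

/-- The affine map between standard simplices with prescribed images of the vertices. -/
def stdSimplex.affineMap {n m : ℕ} (v : Fin (m + 1) → stdSimplex ℝ (Fin (n + 1))) :
    C(stdSimplex ℝ (Fin (m + 1)), stdSimplex ℝ (Fin (n + 1))) where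
  toFun t := ⟨fun j => ∑ i, t i * v i j, fun j => Finset.sum_nonneg fun i _ =>
      mul_nonneg (t.2.1 i) ((v i).2.1 j), by
    rw [Finset.sum_comm]
    simp_rw [← Finset.mul_sum, stdSimplex.sum_eq_one, mul_one]
    exact stdSimplex.sum_eq_one t⟩
  continuous_toFun := by
    refine Continuous.subtype_mk (continuous_pi fun j => continuous_finsetSum _ fun i _ => ?_) _
    exact ((continuous_apply i).comp continuous_subtype_val).mul continuous_const

namespace stdSimplex

variable {n m l : ℕ}

lemma affineMap_apply (v : Fin (m + 1) → stdSimplex ℝ (Fin (n + 1)))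
    (t : stdSimplex ℝ (Fin (m + 1))) (j : Fin (n + 1)) :
    affineMap v t j = ∑ i, t i * v i j := rfl

lemma affineMap_vertex : affineMap (fun i : Fin (n + 1) => vertex (S := ℝ) i) =
    ContinuousMap.id _ := by
  ext t j
  simp [affineMap_apply, Pi.single_apply]

lemma affineMap_apply_vertex (v : Fin (m + 1) → stdSimplex ℝ (Fin (n + 1))) (i : Fin (m + 1)) :
    affineMap v (vertex i) = v i := by
  ext j
  simp [affineMap_apply, Pi.single_apply]

lemma affineMap_affineMap (v : Fin (m + 1) → stdSimplex ℝ (Fin (n + 1)))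
    (w : Fin (l + 1) → stdSimplex ℝ (Fin (m + 1))) (t : stdSimplex ℝ (Fin (l + 1))) :
    affineMap v (affineMap w t) = affineMap (fun i => affineMap v (w i)) t := by
  ext j
  simp only [affineMap_apply, Finset.sum_mul, Finset.mul_sum]
  rw [Finset.sum_comm]
  simp only [mul_assoc]

lemma affineMap_map (v : Fin (m + 1) → stdSimplex ℝ (Fin (n + 1))) (f : Fin (l + 1) → Fin (m + 1))
    (t : stdSimplex ℝ (Fin (l + 1))) :
    affineMap v (map f t) = affineMap (v ∘ f) t := by
  have h : map f t = affineMap (fun i => vertex (f i)) t := by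
    ext j
    rw [affineMap_apply, map_coe, FunOnFinite.linearMap_apply_apply]
    simp [Pi.single_apply, Finset.sum_filter, eq_comm]
  rw [h, affineMap_affineMap]
  simp only [affineMap_apply_vertex]
  rfl

/-- The barycentre of a tuple of points of a standard simplex. -/
def tupleBarycenter (n m : ℕ) (v : Fin (m + 1) → stdSimplex ℝ (Fin (n + 1))) :
    stdSimplex ℝ (Fin (n + 1)) :=
  affineMap v barycenter

lemma affineMap_tupleBarycenter (v : Fin (m + 1) → stdSimplex ℝ (Fin (n + 1)))
    (k : ℕ) (w : Fin (k + 1) → stdSimplex ℝ (Fin (m + 1))) :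
    affineMap v (tupleBarycenter m k w) = tupleBarycenter n k (affineMap v ∘ w) :=
  affineMap_affineMap _ _ _

lemma dist_le_iff_apply {x y : stdSimplex ℝ (Fin (n + 1))} {r : ℝ} (hr : 0 ≤ r) :
    dist x y ≤ r ↔ ∀ j, |x j - y j| ≤ r := by
  rw [Subtype.dist_eq, dist_pi_le_iff hr]
  rfl

lemma affineMap_sub_apply (v : Fin (m + 1) → stdSimplex ℝ (Fin (n + 1)))
    (t : stdSimplex ℝ (Fin (m + 1))) (j : Fin (n + 1)) (a : ℝ) :
    affineMap v t j - a = ∑ i, t i * (v i j - a) := by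
  simp [affineMap_apply, mul_sub, Finset.sum_sub_distrib, ← Finset.sum_mul]

lemma dist_affineMap_le {v : Fin (m + 1) → stdSimplex ℝ (Fin (n + 1))}
    {c : stdSimplex ℝ (Fin (n + 1))} {r : ℝ} (h : ∀ i, dist (v i) c ≤ r)
    (t : stdSimplex ℝ (Fin (m + 1))) : dist (affineMap v t) c ≤ r := by
  have hr : 0 ≤ r := dist_nonneg.trans (h 0)
  rw [dist_le_iff_apply hr]
  intro j
  rw [affineMap_sub_apply]
  calc |∑ i, t i * (v i j - c j)| ≤ ∑ i, t i * r := by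
        refine (Finset.abs_sum_le_sum_abs _ _).trans (Finset.sum_le_sum fun i _ => ?_)
        rw [abs_mul, abs_of_nonneg (zero_le t i)]
        exact mul_le_mul_of_nonneg_left ((dist_le_iff_apply hr).1 (h i) j) (zero_le t i)
    _ = r := by rw [← Finset.sum_mul, sum_eq_one, one_mul]

lemma dist_tupleBarycenter_le {v : Fin (m + 1) → stdSimplex ℝ (Fin (n + 1))} {D : ℝ}
    (h : ∀ i j, dist (v i) (v j) ≤ D) (l : Fin (m + 1)) :
    dist (tupleBarycenter n m v) (v l) ≤ m / (m + 1) * D := by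
  have hD : 0 ≤ D := dist_nonneg.trans (h 0 0)
  rw [dist_le_iff_apply (by positivity)]
  intro j
  rw [tupleBarycenter, affineMap_sub_apply, ← Finset.add_sum_erase _ _ (Finset.mem_univ l),
    sub_self, mul_zero, zero_add]
  calc |∑ i ∈ Finset.univ.erase l, (barycenter : stdSimplex ℝ (Fin (m + 1))) i * (v i j - v l j)|
      ≤ ∑ i ∈ Finset.univ.erase l, (1 / (m + 1) : ℝ) * D := by
        refine (Finset.abs_sum_le_sum_abs _ _).trans (Finset.sum_le_sum fun i _ => ?_)
        have hb : (barycenter : stdSimplex ℝ (Fin (m + 1))) i = 1 / (m + 1) := by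
          exact (barycenter_apply i).trans (by simp)
        rw [abs_mul, hb, abs_of_nonneg (by positivity)]
        exact mul_le_mul_of_nonneg_left ((dist_le_iff_apply hD).1 (h i l) j) (by positivity)
    _ = m / (m + 1) * D := by
        rw [Finset.sum_const, Finset.card_erase_of_mem (Finset.mem_univ l), Finset.card_univ,
          Fintype.card_fin, nsmul_eq_mul]
        push_cast [Nat.add_sub_cancel]
        ring

end stdSimplex

namespace SingularChain

open VertexChain stdSimplex

variable {X : Type*} [TopologicalSpace X]

/-- The `i`-th face of a singular simplex. -/
def face {m : ℕ} (σ : C(stdSimplex ℝ (Fin (m + 2)), X)) (i : Fin (m + 2)) :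
    C(stdSimplex ℝ (Fin (m + 1)), X) :=
  σ.comp ⟨stdSimplex.map i.succAbove, stdSimplex.continuous_map _⟩

variable (X) in
/-- The boundary of a singular chain. -/
def bdry (m : ℕ) : (C(stdSimplex ℝ (Fin (m + 2)), X) →₀ ℚ) →ₗ[ℚ]
    (C(stdSimplex ℝ (Fin (m + 1)), X) →₀ ℚ) :=
  Finsupp.linearCombination ℚ fun σ =>
    ∑ i : Fin (m + 2), (-1 : ℚ) ^ (i : ℕ) • Finsupp.single (face σ i) 1

lemma bdry_single (m : ℕ) (σ : C(stdSimplex ℝ (Fin (m + 2)), X)) :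
    bdry X m (Finsupp.single σ 1) =
      ∑ i : Fin (m + 2), (-1 : ℚ) ^ (i : ℕ) • Finsupp.single (face σ i) 1 := by
  simp [bdry]

/-- The singular chain obtained by composing affine simplices with a singular simplex. -/
def realize {n : ℕ} (σ : C(stdSimplex ℝ (Fin (n + 1)), X)) (m : ℕ) :
    ((Fin (m + 1) → stdSimplex ℝ (Fin (n + 1))) →₀ ℚ) →ₗ[ℚ]
      (C(stdSimplex ℝ (Fin (m + 1)), X) →₀ ℚ) :=
  Finsupp.lmapDomain ℚ ℚ fun v => σ.comp (affineMap v)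

variable {n : ℕ} (σ : C(stdSimplex ℝ (Fin (n + 1)), X))

lemma realize_single (m : ℕ) (v : Fin (m + 1) → stdSimplex ℝ (Fin (n + 1))) (c : ℚ) :
    realize σ m (Finsupp.single v c) = Finsupp.single (σ.comp (affineMap v)) c := by
  simp [realize]

lemma realize_vertex : realize σ n (Finsupp.single (fun i => vertex i) 1) =
    Finsupp.single σ 1 := by
  rw [realize_single, affineMap_vertex, ContinuousMap.comp_id]

lemma bdry_realize (m : ℕ) (x : (Fin (m + 2) → stdSimplex ℝ (Fin (n + 1))) →₀ ℚ) :
    bdry X m (realize σ (m + 1) x) = realize σ m (bd _ m x) := by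
  suffices h : bdry X m ∘ₗ realize σ (m + 1) = realize σ m ∘ₗ bd _ m from LinearMap.congr_fun h x
  refine Finsupp.lhom_ext' fun v => LinearMap.ext_ring ?_
  simp only [LinearMap.comp_apply, Finsupp.lsingle_apply, realize_single, bdry_single, bd_single,
    map_sum, map_smul]
  refine Finset.sum_congr rfl fun i _ => ?_
  congr 2
  ext t
  simp [face, affineMap_map]

lemma realize_comp_affineMap {l : ℕ} (v : Fin (l + 1) → stdSimplex ℝ (Fin (n + 1))) (m : ℕ)
    (x : (Fin (m + 1) → stdSimplex ℝ (Fin (l + 1))) →₀ ℚ) :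
    realize (σ.comp (affineMap v)) m x = realize σ m (push (affineMap v) m x) := by
  suffices h : realize (σ.comp (affineMap v)) m = realize σ m ∘ₗ push (affineMap v) m from
    LinearMap.congr_fun h x
  refine Finsupp.lhom_ext' fun w => LinearMap.ext_ring ?_
  simp only [LinearMap.comp_apply, Finsupp.lsingle_apply, realize_single, push_single]
  congr 1
  ext t
  simp [affineMap_affineMap, Function.comp_def]

variable (X) in
/-- Barycentric subdivision of singular chains. -/
def sd (n : ℕ) : (C(stdSimplex ℝ (Fin (n + 1)), X) →₀ ℚ) →ₗ[ℚ]
    (C(stdSimplex ℝ (Fin (n + 1)), X) →₀ ℚ) :=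
  Finsupp.linearCombination ℚ fun σ =>
    realize σ n (subdiv (tupleBarycenter n) n (Finsupp.single (fun i => vertex i) 1))

variable (X) in
/-- The homotopy between the identity and barycentric subdivision of singular chains. -/
def sdHomotopy (n : ℕ) : (C(stdSimplex ℝ (Fin (n + 1)), X) →₀ ℚ) →ₗ[ℚ]
    (C(stdSimplex ℝ (Fin (n + 2)), X) →₀ ℚ) :=
  Finsupp.linearCombination ℚ fun σ =>
    realize σ (n + 1) (subdivHomotopy (tupleBarycenter n) n
      (Finsupp.single (fun i => vertex i) 1))

lemma sd_single : sd X n (Finsupp.single σ 1) =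
    realize σ n (subdiv (tupleBarycenter n) n (Finsupp.single (fun i => vertex i) 1)) := by
  simp [sd]

lemma sdHomotopy_single : sdHomotopy X n (Finsupp.single σ 1) =
    realize σ (n + 1) (subdivHomotopy (tupleBarycenter n) n
      (Finsupp.single (fun i => vertex i) 1)) := by
  simp [sdHomotopy]

lemma affineMap_comp_vertex {m : ℕ} (v : Fin (m + 1) → stdSimplex ℝ (Fin (n + 1))) :
    (affineMap v ∘ fun i => vertex i) = v :=
  funext (affineMap_apply_vertex v)

lemma sd_realize (m : ℕ) (x : (Fin (m + 1) → stdSimplex ℝ (Fin (n + 1))) →₀ ℚ) :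
    sd X m (realize σ m x) = realize σ m (subdiv (tupleBarycenter n) m x) := by
  suffices h : sd X m ∘ₗ realize σ m = realize σ m ∘ₗ subdiv (tupleBarycenter n) m from
    LinearMap.congr_fun h x
  refine Finsupp.lhom_ext' fun v => LinearMap.ext_ring ?_
  simp only [LinearMap.comp_apply, Finsupp.lsingle_apply]
  rw [realize_single, sd_single, realize_comp_affineMap,
    push_subdiv (affineMap_tupleBarycenter v), push_single, affineMap_comp_vertex]

lemma sdHomotopy_realize (m : ℕ) (x : (Fin (m + 1) → stdSimplex ℝ (Fin (n + 1))) →₀ ℚ) :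
    sdHomotopy X m (realize σ m x) =
      realize σ (m + 1) (subdivHomotopy (tupleBarycenter n) m x) := by
  suffices h : sdHomotopy X m ∘ₗ realize σ m =
      realize σ (m + 1) ∘ₗ subdivHomotopy (tupleBarycenter n) m from LinearMap.congr_fun h x
  refine Finsupp.lhom_ext' fun v => LinearMap.ext_ring ?_
  simp only [LinearMap.comp_apply, Finsupp.lsingle_apply]
  rw [realize_single, sdHomotopy_single, realize_comp_affineMap,
    push_subdivHomotopy (affineMap_tupleBarycenter v), push_single, affineMap_comp_vertex]

lemma bdry_sd (n : ℕ) (x : C(stdSimplex ℝ (Fin (n + 2)), X) →₀ ℚ) :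
    bdry X n (sd X (n + 1) x) = sd X n (bdry X n x) := by
  suffices h : bdry X n ∘ₗ sd X (n + 1) = sd X n ∘ₗ bdry X n from LinearMap.congr_fun h x
  refine Finsupp.lhom_ext' fun σ => LinearMap.ext_ring ?_
  simp only [LinearMap.comp_apply, Finsupp.lsingle_apply]
  rw [← realize_vertex σ, sd_realize, bdry_realize, bdry_realize, sd_realize, bd_subdiv]

lemma bdry_sdHomotopy_zero (x : C(stdSimplex ℝ (Fin 1), X) →₀ ℚ) :
    bdry X 0 (sdHomotopy X 0 x) = x - sd X 0 x := by
  suffices h : bdry X 0 ∘ₗ sdHomotopy X 0 = LinearMap.id - sd X 0 from LinearMap.congr_fun h x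
  refine Finsupp.lhom_ext' fun σ => LinearMap.ext_ring ?_
  simp only [LinearMap.comp_apply, Finsupp.lsingle_apply, LinearMap.sub_apply, LinearMap.id_apply]
  rw [← realize_vertex (n := 0) σ, sdHomotopy_realize, sd_realize, bdry_realize,
    bd_subdivHomotopy_zero, map_sub]

lemma bdry_sdHomotopy (n : ℕ) (x : C(stdSimplex ℝ (Fin (n + 2)), X) →₀ ℚ) :
    bdry X (n + 1) (sdHomotopy X (n + 1) x) + sdHomotopy X n (bdry X n x) =
      x - sd X (n + 1) x := by
  suffices h : bdry X (n + 1) ∘ₗ sdHomotopy X (n + 1) + sdHomotopy X n ∘ₗ bdry X n =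
      LinearMap.id - sd X (n + 1) from LinearMap.congr_fun h x
  refine Finsupp.lhom_ext' fun σ => LinearMap.ext_ring ?_
  simp only [LinearMap.comp_apply, Finsupp.lsingle_apply, LinearMap.add_apply,
    LinearMap.sub_apply, LinearMap.id_apply]
  rw [← realize_vertex σ, sdHomotopy_realize, sd_realize, bdry_realize, bdry_realize,
    sdHomotopy_realize, ← map_add, bd_subdivHomotopy, map_sub]

/-- The singular chains all of whose simplices lie in a given subset. -/
def chainsIn (A : Set X) (n : ℕ) : Submodule ℚ (C(stdSimplex ℝ (Fin (n + 1)), X) →₀ ℚ) :=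
  Finsupp.supported ℚ ℚ {σ | Set.range σ ⊆ A}

variable {σ} {A : Set X}

lemma realize_mem_chainsIn (hσ : Set.range σ ⊆ A) (m : ℕ)
    (x : (Fin (m + 1) → stdSimplex ℝ (Fin (n + 1))) →₀ ℚ) : realize σ m x ∈ chainsIn A m := by
  refine mem_of_mem_supported (s := Set.univ) _ _ (fun v _ => ?_) (by simp)
  rw [realize_single]
  refine single_mem_supported _ ((Set.range_subset_iff.2 fun t => hσ ?_))
  exact Set.mem_range_self _

lemma sd_mem_chainsIn {x : C(stdSimplex ℝ (Fin (n + 1)), X) →₀ ℚ} (hx : x ∈ chainsIn A n) :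
    sd X n x ∈ chainsIn A n :=
  mem_of_mem_supported _ _ (fun τ hτ => by rw [sd_single]; exact realize_mem_chainsIn hτ _ _) hx

lemma sdHomotopy_mem_chainsIn {x : C(stdSimplex ℝ (Fin (n + 1)), X) →₀ ℚ}
    (hx : x ∈ chainsIn A n) : sdHomotopy X n x ∈ chainsIn A (n + 1) :=
  mem_of_mem_supported _ _
    (fun τ hτ => by rw [sdHomotopy_single]; exact realize_mem_chainsIn hτ _ _) hx

variable {U V : Set X}

lemma sd_mem_sup {x : C(stdSimplex ℝ (Fin (n + 1)), X) →₀ ℚ}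
    (hx : x ∈ chainsIn U n ⊔ chainsIn V n) : sd X n x ∈ chainsIn U n ⊔ chainsIn V n := by
  obtain ⟨a, ha, b, hb, rfl⟩ := Submodule.mem_sup.1 hx
  rw [map_add]
  exact Submodule.add_mem_sup (sd_mem_chainsIn ha) (sd_mem_chainsIn hb)

lemma sdHomotopy_mem_sup {x : C(stdSimplex ℝ (Fin (n + 1)), X) →₀ ℚ}
    (hx : x ∈ chainsIn U n ⊔ chainsIn V n) :
    sdHomotopy X n x ∈ chainsIn U (n + 1) ⊔ chainsIn V (n + 1) := by
  obtain ⟨a, ha, b, hb, rfl⟩ := Submodule.mem_sup.1 hx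
  rw [map_add]
  exact Submodule.add_mem_sup (sdHomotopy_mem_chainsIn ha) (sdHomotopy_mem_chainsIn hb)

lemma iterate_sd_realize (m k : ℕ) (x : (Fin (m + 1) → stdSimplex ℝ (Fin (n + 1))) →₀ ℚ) :
    (sd X m)^[k] (realize σ m x) = realize σ m ((subdiv (tupleBarycenter n) m)^[k] x) := by
  induction k with
  | zero => rfl
  | succ k ih => rw [Function.iterate_succ_apply', Function.iterate_succ_apply', ih, sd_realize]

lemma exists_iterate_sd_single_mem (hU : IsOpen U) (hV : IsOpen V) (hσ : Set.range σ ⊆ U ∪ V) :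
    ∃ k₀ : ℕ, ∀ k ≥ k₀, (sd X n)^[k] (Finsupp.single σ 1) ∈ chainsIn U n ⊔ chainsIn V n := by
  obtain ⟨δ, hδ, hball⟩ := lebesgue_number_lemma_of_metric
    (s := (Set.univ : Set (stdSimplex ℝ (Fin (n + 1))))) (c := fun b : Bool =>
      σ ⁻¹' (bif b then U else V)) isCompact_univ
    (by rintro (_ | _) <;> [exact hV.preimage σ.continuous; exact hU.preimage σ.continuous])
    (fun t _ => by
      rcases hσ (Set.mem_range_self t) with h | h
      · exact Set.mem_iUnion.2 ⟨true, h⟩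
      · exact Set.mem_iUnion.2 ⟨false, h⟩)
  have hlt : (n : ℝ) / (n + 1) < 1 := by
    rw [div_lt_one (by positivity)]
    linarith
  obtain ⟨k₀, hk₀⟩ := exists_pow_lt_of_lt_one hδ hlt
  refine ⟨k₀, fun k hk => ?_⟩
  have hk' : ((n : ℝ) / (n + 1)) ^ k * 1 < δ := by
    rw [mul_one]
    exact (pow_le_pow_of_le_one (by positivity) hlt.le hk).trans_lt hk₀
  have hvert : ∀ i j : Fin (n + 1),
      dist (vertex i : stdSimplex ℝ (Fin (n + 1))) (vertex j) ≤ 1 := by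
    intro i j
    rw [dist_le_iff_apply zero_le_one]
    intro l
    have h1 := le_one (vertex i : stdSimplex ℝ (Fin (n + 1))) l
    have h2 := le_one (vertex j : stdSimplex ℝ (Fin (n + 1))) l
    have h3 := zero_le (vertex i : stdSimplex ℝ (Fin (n + 1))) l
    have h4 := zero_le (vertex j : stdSimplex ℝ (Fin (n + 1))) l
    rw [abs_le]
    constructor <;> linarith
  rw [← realize_vertex σ, iterate_sd_realize]
  refine mem_of_mem_supported _ _ (fun w hw => ?_)
    (iterate_subdiv_mem_supported (β := tupleBarycenter n)
      (fun m v c r h => dist_affineMap_le h _) (fun m v D h => dist_tupleBarycenter_le h)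
      n _ zero_le_one hvert k)
  rw [realize_single]
  obtain ⟨b, hb⟩ := hball (w 0) (Set.mem_univ _)
  have hmem : Set.range (σ.comp (affineMap w)) ⊆ bif b then U else V := by
    rintro _ ⟨t, rfl⟩
    refine hb ?_
    rw [Metric.mem_ball]
    exact (dist_affineMap_le (fun i => hw i 0) t).trans_lt hk'
  cases b
  · exact Submodule.mem_sup_right (single_mem_supported _ hmem)
  · exact Submodule.mem_sup_left (single_mem_supported _ hmem)

lemma exists_iterate_sd_mem (hU : IsOpen U) (hV : IsOpen V)
    {x : C(stdSimplex ℝ (Fin (n + 1)), X) →₀ ℚ} (hx : x ∈ chainsIn (U ∪ V) n) :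
    ∃ k₀ : ℕ, ∀ k ≥ k₀, (sd X n)^[k] x ∈ chainsIn U n ⊔ chainsIn V n := by
  rw [chainsIn, Finsupp.supported_eq_span_single] at hx
  induction hx using Submodule.span_induction with
  | mem x h =>
    obtain ⟨τ, hτ, rfl⟩ := h
    exact exists_iterate_sd_single_mem hU hV hτ
  | zero => exact ⟨0, fun k _ => by rw [iterate_map_zero]; exact Submodule.zero_mem _⟩
  | add x y _ _ hx hy =>
    obtain ⟨k₁, h₁⟩ := hx
    obtain ⟨k₂, h₂⟩ := hy
    refine ⟨max k₁ k₂, fun k hk => ?_⟩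
    rw [iterate_map_add]
    exact Submodule.add_mem _ (h₁ k (le_of_max_le_left hk)) (h₂ k (le_of_max_le_right hk))
  | smul c x _ hx =>
    obtain ⟨k₁, h₁⟩ := hx
    refine ⟨k₁, fun k hk => ?_⟩
    rw [← Module.End.pow_apply, map_smul, Module.End.pow_apply]
    exact Submodule.smul_mem _ _ (h₁ k hk)

/-- A relative cycle modulo small chains is homologous to a small chain. -/
theorem exists_sub_bdry_mem (hU : IsOpen U) (hV : IsOpen V)
    {x : C(stdSimplex ℝ (Fin (n + 1)), X) →₀ ℚ} (hx : x ∈ chainsIn (U ∪ V) n)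
    (hstep : ∀ z ∈ chainsIn (U ∪ V) n, (∃ k, z = (sd X n)^[k] x) →
      z - sd X n z - bdry X n (sdHomotopy X n z) ∈ chainsIn U n ⊔ chainsIn V n) :
    ∃ y ∈ chainsIn (U ∪ V) (n + 1), x - bdry X n y ∈ chainsIn U n ⊔ chainsIn V n := by
  have key : ∀ k : ℕ, (sd X n)^[k] x ∈ chainsIn (U ∪ V) n ∧
      ∃ y ∈ chainsIn (U ∪ V) (n + 1),
        x - (sd X n)^[k] x - bdry X n y ∈ chainsIn U n ⊔ chainsIn V n := by
    intro k
    induction k with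
    | zero => exact ⟨hx, 0, Submodule.zero_mem _, by simp⟩
    | succ k ih =>
      obtain ⟨hk, y, hy, hxy⟩ := ih
      rw [Function.iterate_succ_apply']
      refine ⟨sd_mem_chainsIn hk, y + sdHomotopy X n ((sd X n)^[k] x),
        Submodule.add_mem _ hy (sdHomotopy_mem_chainsIn hk), ?_⟩
      have := Submodule.add_mem _ hxy (hstep _ hk ⟨k, rfl⟩)
      rw [map_add]
      convert this using 1
      abel
  obtain ⟨k, hk⟩ := exists_iterate_sd_mem hU hV hx
  obtain ⟨-, y, hy, hxy⟩ := key k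
  refine ⟨y, hy, ?_⟩
  convert Submodule.add_mem _ hxy (hk k le_rfl) using 1
  abel

theorem exists_sub_bdry_mem_zero (hU : IsOpen U) (hV : IsOpen V)
    {x : C(stdSimplex ℝ (Fin 1), X) →₀ ℚ} (hx : x ∈ chainsIn (U ∪ V) 0) :
    ∃ y ∈ chainsIn (U ∪ V) 1, x - bdry X 0 y ∈ chainsIn U 0 ⊔ chainsIn V 0 :=
  exists_sub_bdry_mem hU hV hx fun z _ _ => by
    rw [bdry_sdHomotopy_zero, sub_self]
    exact Submodule.zero_mem _

theorem exists_sub_bdry_mem_succ (hU : IsOpen U) (hV : IsOpen V)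
    {x : C(stdSimplex ℝ (Fin (n + 2)), X) →₀ ℚ} (hx : x ∈ chainsIn (U ∪ V) (n + 1))
    (hdx : bdry X n x ∈ chainsIn U n ⊔ chainsIn V n) :
    ∃ y ∈ chainsIn (U ∪ V) (n + 2),
      x - bdry X (n + 1) y ∈ chainsIn U (n + 1) ⊔ chainsIn V (n + 1) := by
  refine exists_sub_bdry_mem hU hV hx ?_
  rintro _ - ⟨k, rfl⟩
  have hk : bdry X n ((sd X (n + 1))^[k] x) ∈ chainsIn U n ⊔ chainsIn V n := by
    induction k with
    | zero => exact hdx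
    | succ k ih =>
      rw [Function.iterate_succ_apply', bdry_sd]
      exact sd_mem_sup ih
  rw [← bdry_sdHomotopy, add_sub_cancel_left]
  exact sdHomotopy_mem_sup hk

end SingularChain

namespace SingularChain

open Limits

/-- The rational singular chain complex as a functor. -/
def chains : TopCat.{0} ⥤ ChainComplex (ModuleCat.{0} ℚ) ℕ :=
  TopCat.toSSet ⋙ (SimplicialObject.whiskering _ _).obj (ModuleCat.free ℚ) ⋙
    AlgebraicTopology.alternatingFaceMapComplex _

/-- Rational singular chains of `X` as formal combinations of continuous maps. -/
def chainsEquiv (X : TopCat.{0}) (n : ℕ) :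
    ((chains.obj X).X n : Type) ≃ₗ[ℚ] (C(stdSimplex ℝ (Fin (n + 1)), X) →₀ ℚ) :=
  Finsupp.domLCongr (X.toSSetObjEquiv (Opposite.op (SimplexCategory.mk n)))

lemma chainsEquiv_single (X : TopCat.{0}) (n : ℕ)
    (σ : (TopCat.toSSet.obj X).obj (Opposite.op (SimplexCategory.mk n))) :
    chainsEquiv X n (Finsupp.single σ 1) =
      Finsupp.single (X.toSSetObjEquiv (Opposite.op (SimplexCategory.mk n)) σ) 1 :=
  Finsupp.domLCongr_single _ _ _

lemma free_map_single {S T : Type} (g : S ⟶ T) (a : S) :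
    ((ModuleCat.free ℚ).map g).hom (Finsupp.single a 1) = Finsupp.single (g a) 1 :=
  Finsupp.mapDomain_single

lemma chainsEquiv_d (X : TopCat.{0}) (n : ℕ) (x : ((chains.obj X).X (n + 1) : Type)) :
    chainsEquiv X n ((chains.obj X).d (n + 1) n x) = bdry X n (chainsEquiv X (n + 1) x) := by
  suffices h : (chainsEquiv X n).toLinearMap ∘ₗ ((chains.obj X).d (n + 1) n).hom =
      bdry X n ∘ₗ (chainsEquiv X (n + 1)).toLinearMap from LinearMap.congr_fun h x
  refine Finsupp.lhom_ext' fun σ => LinearMap.ext_ring ?_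
  let F := ((SimplicialObject.whiskering _ _).obj (ModuleCat.free ℚ)).obj (TopCat.toSSet.obj X)
  have h1 : (chains.obj X).d (n + 1) n = _ :=
    AlgebraicTopology.AlternatingFaceMapComplex.obj_d_eq F n
  rw [h1]
  change (chainsEquiv X n) ((∑ i : Fin (n + 2), (-1 : ℤ) ^ (i : ℕ) • F.δ i).hom
    (Finsupp.single σ 1)) = bdry X n (chainsEquiv X (n + 1) (Finsupp.single σ 1))
  rw [chainsEquiv_single, bdry_single, ModuleCat.hom_sum]
  refine (congrArg (chainsEquiv X n) (LinearMap.sum_apply _ _ _)).trans ?_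
  refine (map_sum (chainsEquiv X n) _ _).trans (Finset.sum_congr rfl fun i _ => ?_)
  have h2 : ((-1 : ℤ) ^ (i : ℕ) • F.δ i).hom (Finsupp.single σ 1) =
      (-1 : ℤ) ^ (i : ℕ) • Finsupp.single ((TopCat.toSSet.obj X).δ i σ) (1 : ℚ) := by
    rw [ModuleCat.hom_zsmul]
    exact (LinearMap.smul_apply _ _ _).trans
      (congrArg (fun y => (-1 : ℤ) ^ (i : ℕ) • y) (free_map_single _ _))
  refine (congrArg (chainsEquiv X n) h2).trans ?_
  rcases neg_one_pow_eq_or ℤ (i : ℕ) with h | h <;>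
    rcases neg_one_pow_eq_or ℚ (i : ℕ) with h' | h'
  · rw [h, h', one_smul, one_smul]
    exact chainsEquiv_single _ _ _
  · exfalso
    have := congrArg (Int.cast : ℤ → ℚ) h
    push_cast at this
    rw [h'] at this
    norm_num at this
  · exfalso
    have := congrArg (Int.cast : ℤ → ℚ) h
    push_cast at this
    rw [h'] at this
    norm_num at this
  · rw [h, h', neg_smul, neg_smul, one_smul, one_smul]
    exact (map_neg (chainsEquiv X n) _).trans (congrArg _ (chainsEquiv_single _ _ _))

lemma chainsEquiv_map {X Y : TopCat.{0}} (f : X ⟶ Y) (n : ℕ) (x : ((chains.obj X).X n : Type)) :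
    chainsEquiv Y n ((chains.map f).f n x) =
      Finsupp.mapDomain (fun σ => f.hom.comp σ) (chainsEquiv X n x) := by
  suffices h : (chainsEquiv Y n).toLinearMap ∘ₗ ((chains.map f).f n).hom =
      Finsupp.lmapDomain ℚ ℚ (fun σ => f.hom.comp σ) ∘ₗ (chainsEquiv X n).toLinearMap from
    LinearMap.congr_fun h x
  refine Finsupp.lhom_ext' fun σ => LinearMap.ext_ring ?_
  change (chainsEquiv Y n) (((ModuleCat.free ℚ).map ((TopCat.toSSet.map f).app _)).hom
    (Finsupp.single σ 1)) = Finsupp.mapDomain _ (chainsEquiv X n (Finsupp.single σ 1))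
  rw [chainsEquiv_single, Finsupp.mapDomain_single, free_map_single]
  exact chainsEquiv_single _ _ _

lemma mono_chains_map {X Y : TopCat.{0}} (f : X ⟶ Y) (hf : Function.Injective f) :
    Mono (chains.map f) := by
  refine HomologicalComplex.mono_of_mono_f _ fun n => ?_
  rw [ModuleCat.mono_iff_injective]
  intro x y hxy
  have h := congrArg (chainsEquiv Y n) hxy
  rw [chainsEquiv_map, chainsEquiv_map] at h
  refine (chainsEquiv X n).injective (Finsupp.mapDomain_injective (fun σ τ h => ?_) h)
  ext t
  exact hf (congrArg (fun g => g t) h)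

/-- The inclusion of subspaces as a morphism of spaces. -/
def incl {X : Type} [TopologicalSpace X] {A B : Set X} (h : A ⊆ B) :
    TopCat.of A ⟶ TopCat.of B :=
  TopCat.ofHom ⟨Set.inclusion h, continuous_inclusion h⟩

instance {X : Type} [TopologicalSpace X] {A B : Set X} (h : A ⊆ B) :
    Mono (chains.map (incl h)) :=
  mono_chains_map _ (Set.inclusion_injective h)

/-- The inclusion of a subspace in the whole space. -/
def inclVal {X : Type} [TopologicalSpace X] (A : Set X) : TopCat.of A ⟶ TopCat.of X :=
  TopCat.ofHom ⟨Subtype.val, continuous_subtype_val⟩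

instance {X : Type} [TopologicalSpace X] (A : Set X) : Mono (chains.map (inclVal A)) :=
  mono_chains_map _ Subtype.val_injective

lemma incl_comp_inclVal {X : Type} [TopologicalSpace X] {A B : Set X} (h : A ⊆ B) :
    incl h ≫ inclVal B = inclVal A := rfl

lemma incl_comp_incl {X : Type} [TopologicalSpace X] {A B D : Set X} (h : A ⊆ B) (h' : B ⊆ D) :
    incl h ≫ incl h' = incl (h.trans h') := rfl

/-- Chains of a subspace, viewed as chains of the ambient space. -/
def subChain {X : Type} [TopologicalSpace X] (A : Set X) (n : ℕ) :
    ((chains.obj (TopCat.of A)).X n : Type) →ₗ[ℚ] (C(stdSimplex ℝ (Fin (n + 1)), X) →₀ ℚ) :=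
  (chainsEquiv (TopCat.of X) n).toLinearMap ∘ₗ ((chains.map (inclVal A)).f n).hom

section subChain

variable {X : Type} [TopologicalSpace X] {A B : Set X}

lemma subChain_injective (A : Set X) (n : ℕ) : Function.Injective (subChain A n) := by
  refine (chainsEquiv (TopCat.of X) n).injective.comp ?_
  exact (ModuleCat.mono_iff_injective _).1 inferInstance

lemma subChain_incl (h : A ⊆ B) (n : ℕ) (x : ((chains.obj (TopCat.of A)).X n : Type)) :
    subChain B n ((chains.map (incl h)).f n x) = subChain A n x := by
  have := congrArg (fun f => (chainsEquiv (TopCat.of X) n) ((chains.map f).f n x))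
    (incl_comp_inclVal h)
  simpa [subChain] using this

lemma subChain_d (A : Set X) (n : ℕ) (x : ((chains.obj (TopCat.of A)).X (n + 1) : Type)) :
    subChain A n ((chains.obj (TopCat.of A)).d (n + 1) n x) = bdry X n (subChain A (n + 1) x) := by
  have h : (chains.map (inclVal A)).f n ((chains.obj (TopCat.of A)).d (n + 1) n x) =
      (chains.obj (TopCat.of X)).d (n + 1) n ((chains.map (inclVal A)).f (n + 1) x) :=
    (ConcreteCategory.congr_hom ((chains.map (inclVal A)).comm (n + 1) n) x).symm
  exact (congrArg (chainsEquiv (TopCat.of X) n) h).trans (chainsEquiv_d _ _ _)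

lemma range_subChain (A : Set X) (n : ℕ) : LinearMap.range (subChain A n) = chainsIn A n := by
  have h : subChain A n = Finsupp.lmapDomain ℚ ℚ (fun σ => (inclVal A).hom.comp σ) ∘ₗ
      (chainsEquiv (TopCat.of A) n).toLinearMap :=
    LinearMap.ext fun x => chainsEquiv_map _ _ _
  rw [h, LinearMap.range_comp, LinearEquiv.range, chainsIn, ← Finsupp.supported_univ,
    Finsupp.lmapDomain_supported]
  congr 1
  ext σ
  simp only [Set.image_univ, Set.mem_range, Set.mem_ofPred_eq]
  constructor
  · rintro ⟨τ, rfl⟩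
    rintro _ ⟨t, rfl⟩
    exact (τ t).2
  · intro hσ
    exact ⟨⟨fun t => ⟨σ t, hσ ⟨t, rfl⟩⟩, by fun_prop⟩, rfl⟩

end subChain

end SingularChain

namespace SingularChain

open Limits

section Algebra

variable {A B C D : ChainComplex (ModuleCat.{0} ℚ) ℕ}

lemma shortExact_cokernel (i : A ⟶ B) [Mono i] :
    (ShortComplex.mk i (cokernel.π i) (cokernel.condition i)).ShortExact :=
  { exact := ShortComplex.exact_cokernel i
    mono_f := inferInstanceAs (Mono i)
    epi_g := inferInstanceAs (Epi (cokernel.π i)) }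

lemma exists_cokernel_π (i : A ⟶ B) (n : ℕ) (q : (cokernel i).X n) :
    ∃ b : B.X n, (cokernel.π i).f n b = q :=
  (ModuleCat.epi_iff_surjective ((cokernel.π i).f n)).1 inferInstance q

lemma cokernel_π_eq_zero_iff (i : A ⟶ B) [Mono i] {n : ℕ} (b : B.X n) :
    (cokernel.π i).f n b = 0 ↔ ∃ a : A.X n, i.f n a = b := by
  have h := (shortExact_cokernel i).map_of_exact (HomologicalComplex.eval _ _ n)
  constructor
  · exact fun hb => (ShortComplex.moduleCat_exact_iff _).1 h.exact b hb
  · rintro ⟨a, rfl⟩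
    exact ConcreteCategory.congr_hom (HomologicalComplex.congr_hom (cokernel.condition i) n) a

lemma quasiIso_of_acyclic {S : ShortComplex (ChainComplex (ModuleCat.{0} ℚ) ℕ)}
    (hS : S.ShortExact) (h : S.X₃.Acyclic) : QuasiIso S.f := by
  refine ⟨fun n => ?_⟩
  rw [quasiIsoAt_iff_isIso_homologyMap]
  have hz (m : ℕ) : IsZero (S.X₃.homology m) := (h m).isZero_homology
  have : Mono (HomologicalComplex.homologyMap S.f n) :=
    (hS.homology_exact₁ (n + 1) n rfl).mono_g ((hz _).eq_of_src _ _)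
  have : Epi (HomologicalComplex.homologyMap S.f n) :=
    (hS.homology_exact₂ n).epi_f ((hz _).eq_of_tgt _ _)
  exact isIso_of_mono_of_epi _

lemma f_d_apply (f : A ⟶ B) (n m : ℕ) (x : A.X n) :
    B.d n m (f.f n x) = f.f m (A.d n m x) :=
  ConcreteCategory.congr_hom (f.comm n m) x

lemma acyclic_of_forall (K : ChainComplex (ModuleCat.{0} ℚ) ℕ)
    (h₀ : ∀ x : K.X 0, ∃ y, K.d 1 0 y = x)
    (h₁ : ∀ (n : ℕ) (x : K.X (n + 1)), K.d (n + 1) n x = 0 → ∃ y, K.d (n + 2) (n + 1) y = x) :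
    K.Acyclic := by
  rintro (_ | n)
  · rw [HomologicalComplex.exactAt_iff' K 1 0 0 (by simp) (by simp),
      ShortComplex.moduleCat_exact_iff]
    exact fun x _ => h₀ x
  · rw [HomologicalComplex.exactAt_iff' K (n + 2) (n + 1) n (by simp) (by simp),
      ShortComplex.moduleCat_exact_iff]
    exact h₁ n

lemma quasiIso_of_square {P Q : ChainComplex (ModuleCat.{0} ℚ) ℕ}
    (i : A ⟶ B) (j : C ⟶ D) (g : B ⟶ D) (p : B ⟶ P) (q : D ⟶ Q) (φ : P ⟶ Q)
    (hp : ∀ n (x : P.X n), ∃ b, p.f n b = x) (hq : ∀ n (x : Q.X n), ∃ d, q.f n d = x)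
    (hpi : ∀ n (b : B.X n), p.f n b = 0 ↔ ∃ a, i.f n a = b)
    (hqj : ∀ n (d : D.X n), q.f n d = 0 ↔ ∃ c, j.f n c = d)
    (hπ : ∀ n (b : B.X n), φ.f n (p.f n b) = q.f n (g.f n b))
    (h : ∀ (n : ℕ) (b : B.X n) (c : C.X n), g.f n b = j.f n c → ∃ a, i.f n a = b)
    (h₀ : ∀ z : D.X 0, ∃ y b c, z = D.d 1 0 y + (g.f 0 b + j.f 0 c))
    (h₁ : ∀ (n : ℕ) (z : D.X (n + 1)), (∃ b c, D.d (n + 1) n z = g.f n b + j.f n c) →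
      ∃ y b c, z = D.d (n + 2) (n + 1) y + (g.f (n + 1) b + j.f (n + 1) c)) :
    QuasiIso φ := by
  have : Mono φ := by
    refine HomologicalComplex.mono_of_mono_f _ fun n => ?_
    rw [ModuleCat.mono_iff_injective]
    refine (injective_iff_map_eq_zero (φ.f n).hom).2 fun x hx => ?_
    obtain ⟨b, rfl⟩ := hp n x
    replace hx : φ.f n (p.f n b) = 0 := hx
    rw [hπ, hqj] at hx
    obtain ⟨c, hc⟩ := hx
    exact (hpi n b).2 (h n b c hc.symm)
  have hj (n : ℕ) (c : C.X n) : q.f n (j.f n c) = 0 := (hqj n _).2 ⟨c, rfl⟩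
  have hg (n : ℕ) (b : B.X n) : (cokernel.π φ).f n (q.f n (g.f n b)) = 0 := by
    rw [← hπ]
    exact (cokernel_π_eq_zero_iff φ _).2 ⟨_, rfl⟩
  refine quasiIso_of_acyclic (shortExact_cokernel φ) (acyclic_of_forall _ ?_ ?_)
  · intro x
    obtain ⟨x, rfl⟩ := exists_cokernel_π φ 0 x
    obtain ⟨z, rfl⟩ := hq 0 x
    obtain ⟨y, b, c, rfl⟩ := h₀ z
    refine ⟨(cokernel.π φ).f 1 (q.f 1 y), ?_⟩
    dsimp only
    rw [f_d_apply, f_d_apply, map_add, map_add, map_add, map_add, hj, hg, map_zero, add_zero,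
      add_zero]
  · intro n x hx
    obtain ⟨x, rfl⟩ := exists_cokernel_π φ (n + 1) x
    obtain ⟨z, rfl⟩ := hq (n + 1) x
    dsimp only at hx
    rw [f_d_apply, cokernel_π_eq_zero_iff] at hx
    obtain ⟨x, hx⟩ := hx
    obtain ⟨b, rfl⟩ := hp n x
    rw [hπ, f_d_apply, ← sub_eq_zero, ← map_sub, hqj] at hx
    obtain ⟨c, hc⟩ := hx
    obtain ⟨y, b, c, rfl⟩ := h₁ n z ⟨b, -c, by rw [map_neg, hc, neg_sub, add_sub_cancel]⟩
    refine ⟨(cokernel.π φ).f (n + 2) (q.f (n + 2) y), ?_⟩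
    dsimp only
    rw [f_d_apply, f_d_apply, map_add, map_add, map_add, map_add, hj, hg, map_zero, add_zero,
      add_zero]

lemma cokernel_map_π_apply (i : A ⟶ B) (j : C ⟶ D) (f : A ⟶ C) (g : B ⟶ D)
    (w : i ≫ g = f ≫ j) (n : ℕ) (b : B.X n) :
    (cokernel.map i j f g w).f n ((cokernel.π i).f n b) = (cokernel.π j).f n (g.f n b) :=
  ConcreteCategory.congr_hom (HomologicalComplex.congr_hom (cokernel.π_desc i (g ≫ cokernel.π j)
    (by rw [← Category.assoc, w, Category.assoc, cokernel.condition, comp_zero])) n) b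

lemma shortExact_of_cokernels {P Q R : ChainComplex (ModuleCat.{0} ℚ) ℕ}
    (i : A ⟶ B) (j : B ⟶ C) (p : B ⟶ P) (q : C ⟶ Q) (r : C ⟶ R) (φ : P ⟶ Q) (ψ : Q ⟶ R)
    (w : φ ≫ ψ = 0) (hj : ∀ n, Function.Injective (j.f n))
    (hp : ∀ n (x : P.X n), ∃ b, p.f n b = x) (hq : ∀ n (x : Q.X n), ∃ d, q.f n d = x)
    (hr : ∀ n (x : R.X n), ∃ d, r.f n d = x)
    (hpi : ∀ n (b : B.X n), p.f n b = 0 ↔ ∃ a, i.f n a = b)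
    (hqi : ∀ n (c : C.X n), q.f n c = 0 ↔ ∃ a, j.f n (i.f n a) = c)
    (hrj : ∀ n (c : C.X n), r.f n c = 0 ↔ ∃ b, j.f n b = c)
    (hφ : ∀ n (b : B.X n), φ.f n (p.f n b) = q.f n (j.f n b))
    (hψ : ∀ n (c : C.X n), ψ.f n (q.f n c) = r.f n c) :
    (ShortComplex.mk φ ψ w).ShortExact := by
  refine HomologicalComplex.shortExact_of_degreewise_shortExact _ fun n => ?_
  refine
    { exact := ?_
      mono_f := ?_
      epi_g := ?_ }
  · rw [ShortComplex.moduleCat_exact_iff]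
    intro x hx
    obtain ⟨c, rfl⟩ := hq n x
    replace hx : ψ.f n (q.f n c) = 0 := hx
    rw [hψ, hrj] at hx
    obtain ⟨b, rfl⟩ := hx
    exact ⟨p.f n b, hφ n b⟩
  · refine (ModuleCat.mono_iff_injective (φ.f n)).2 ?_
    refine (injective_iff_map_eq_zero (φ.f n).hom).2 fun x hx => ?_
    obtain ⟨b, rfl⟩ := hp n x
    replace hx : φ.f n (p.f n b) = 0 := hx
    rw [hφ, hqi] at hx
    obtain ⟨a, ha⟩ := hx
    exact (hpi n b).2 ⟨a, hj n ha⟩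
  · refine (ModuleCat.epi_iff_surjective (ψ.f n)).2 fun x => ?_
    obtain ⟨c, rfl⟩ := hr n x
    exact ⟨q.f n c, hψ n c⟩

lemma shortExact_cokernel_comp (i : A ⟶ B) (j : B ⟶ C) (k : A ⟶ C) (hk : i ≫ j = k)
    [Mono i] [Mono j] [Mono k] :
    (ShortComplex.mk (cokernel.map i k (𝟙 A) j (by simp [hk]))
      (cokernel.map k j i (𝟙 C) (by simp [hk])) (by
        rw [← cancel_epi (cokernel.π i)]
        simp)).ShortExact := by
  refine shortExact_of_cokernels i j (cokernel.π i) (cokernel.π k) (cokernel.π j) _ _ _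
    (fun n => (ModuleCat.mono_iff_injective (j.f n)).1 inferInstance)
    (exists_cokernel_π i) (exists_cokernel_π k) (exists_cokernel_π j)
    (fun _ => cokernel_π_eq_zero_iff i) (fun n c => ?_) (fun _ => cokernel_π_eq_zero_iff j)
    (fun n b => cokernel_map_π_apply _ _ _ _ _ n b) (fun n b => cokernel_map_π_apply _ _ _ _ _ n b)
  subst hk
  exact cokernel_π_eq_zero_iff (i ≫ j) c

end Algebra

end SingularChain

namespace SingularChain

open Limits HomologicalComplex

lemma rank_homology_of_quasiIso {K L : ChainComplex (ModuleCat.{0} ℚ) ℕ} (f : K ⟶ L) [QuasiIso f]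
    (d : ℕ) : Module.rank ℚ (K.homology d) = Module.rank ℚ (L.homology d) :=
  (asIso (homologyMap f d)).toLinearEquiv.rank_eq

section Homotopy

variable {X Y : TopCat.{0}}

lemma homologyMap_eq_of_homotopy {f g : X ⟶ Y} (H : TopCat.Homotopy f g) (d : ℕ) :
    homologyMap (chains.map f) d = homologyMap (chains.map g) d :=
  ((H.toSSet.toSimplicialObjectHomotopy.whiskerRight
    (ModuleCat.free ℚ)).toChainHomotopy).homologyMap_eq d

lemma homologyMap_endo_of_contractible [ContractibleSpace X] (f : X ⟶ X) (d : ℕ) :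
    homologyMap (chains.map f) d = 𝟙 _ := by
  obtain ⟨p, ⟨H⟩⟩ := id_nullhomotopic X
  have h₁ : homologyMap (chains.map f) d = homologyMap (chains.map (TopCat.const p)) d :=
    homologyMap_eq_of_homotopy (f := f) (g := TopCat.const p)
      (H.comp (ContinuousMap.Homotopy.refl f.hom)) d
  have h₂ : homologyMap (chains.map (𝟙 X)) d = homologyMap (chains.map (TopCat.const p)) d :=
    homologyMap_eq_of_homotopy (f := 𝟙 X) (g := TopCat.const p) H d
  rw [h₁, ← h₂, chains.map_id, homologyMap_id]

lemma quasiIso_of_contractible [ContractibleSpace X] [ContractibleSpace Y] (f : X ⟶ Y) :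
    QuasiIso (chains.map f) := by
  refine ⟨fun d => ?_⟩
  rw [quasiIsoAt_iff_isIso_homologyMap]
  obtain ⟨x⟩ : Nonempty X := inferInstance
  let g : Y ⟶ X := TopCat.const x
  refine ⟨homologyMap (chains.map g) d, ?_, ?_⟩
  · rw [← homologyMap_comp, ← Functor.map_comp, homologyMap_endo_of_contractible]
  · rw [← homologyMap_comp, ← Functor.map_comp, homologyMap_endo_of_contractible]

/-- The singular chain complex of a one-point space. -/
def chainsPointIso : chains.obj (TopCat.of PUnit.{1}) ≅
    ChainComplex.alternatingConst.obj ((ModuleCat.free ℚ).obj PUnit.{1}) :=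
  (AlgebraicTopology.alternatingFaceMapComplex _).mapIso
    (((SimplicialObject.whiskering _ _).obj _).mapIso
    (TopCat.toSSetIsoConst (TopCat.of PUnit.{1})) ≪≫ Functor.constComp _ _ _) ≪≫
    AlgebraicTopology.alternatingFaceMapComplexConst.app _

lemma rank_homology_contractible (X : TopCat.{0}) [ContractibleSpace X] (d : ℕ) :
    Module.rank ℚ ((chains.obj X).homology d) = if d = 0 then 1 else 0 := by
  have := quasiIso_of_contractible (TopCat.const PUnit.unit : X ⟶ TopCat.of PUnit.{1})
  rw [rank_homology_of_quasiIso (chains.map (TopCat.const PUnit.unit : X ⟶ TopCat.of PUnit.{1})),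
    rank_homology_of_quasiIso chainsPointIso.hom]
  split_ifs with hd
  · subst hd
    rw [(ChainComplex.alternatingConstHomologyZero
      ((ModuleCat.free ℚ).obj PUnit.{1})).toLinearEquiv.rank_eq]
    exact (rank_finsupp_self (R := ℚ) (ι := PUnit)).trans (by simp)
  · have := ModuleCat.subsingleton_of_isZero
      (ChainComplex.alternatingConst_exactAt ((ModuleCat.free ℚ).obj PUnit.{1}) d hd).isZero_homology
    exact rank_subsingleton' ℚ _

end Homotopy

section Relative

variable {X : Type} [TopologicalSpace X] {A B D : Set X}

/-- The relative singular chain complex of a pair of subspaces. -/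
abbrev rel (h : A ⊆ B) : ChainComplex (ModuleCat.{0} ℚ) ℕ := cokernel (chains.map (incl h))

lemma shortExact_pair (h : A ⊆ B) :
    (ShortComplex.mk (chains.map (incl h)) (cokernel.π (chains.map (incl h)))
      (cokernel.condition _)).ShortExact :=
  shortExact_cokernel _

lemma acyclic_rel (h : A ⊆ B) (hq : QuasiIso (chains.map (incl h))) : (rel h).Acyclic :=
  (shortExact_pair h).acyclic_X₃ hq

/-- The map of relative complexes of pairs given by a map of pairs. -/
def relMap {X' : Type} [TopologicalSpace X'] {A' B' : Set X'} (h : A ⊆ B) (h' : A' ⊆ B')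
    (f : TopCat.of A ⟶ TopCat.of A') (g : TopCat.of B ⟶ TopCat.of B')
    (w : incl h ≫ g = f ≫ incl h') : rel h ⟶ rel h' :=
  cokernel.map _ _ (chains.map f) (chains.map g) (by rw [← chains.map_comp, w, chains.map_comp])

lemma quasiIso_relMap {X' : Type} [TopologicalSpace X'] {A' B' : Set X'} (h : A ⊆ B) (h' : A' ⊆ B')
    (f : TopCat.of A ⟶ TopCat.of A') (g : TopCat.of B ⟶ TopCat.of B')
    (w : incl h ≫ g = f ≫ incl h') (hf : QuasiIso (chains.map f)) (hg : QuasiIso (chains.map g)) :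
    QuasiIso (relMap h h' f g w) := by
  let φ : ShortComplex.mk (chains.map (incl h)) (cokernel.π (chains.map (incl h)))
      (cokernel.condition _) ⟶ ShortComplex.mk (chains.map (incl h'))
        (cokernel.π (chains.map (incl h'))) (cokernel.condition _) :=
    { τ₁ := chains.map f
      τ₂ := chains.map g
      τ₃ := relMap h h' f g w
      comm₁₂ := by
        dsimp only
        rw [← chains.map_comp, ← w, chains.map_comp]
      comm₂₃ := by
        dsimp only
        rw [relMap, cokernel.π_desc] }
  exact HomologySequence.quasiIso_τ₃ φ (shortExact_pair h) (shortExact_pair h') hf hg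

lemma rank_rel_of_homeomorph {X' : Type} [TopologicalSpace X'] {A' B' : Set X'}
    (h : A ⊆ B) (h' : A' ⊆ B') (e : B ≃ₜ B') (he : ∀ b : B, (e b : X') ∈ A' ↔ (b : X) ∈ A)
    (d : ℕ) : Module.rank ℚ ((rel h).homology d) = Module.rank ℚ ((rel h').homology d) := by
  let f : TopCat.of A ≅ TopCat.of A' :=
    { hom := TopCat.ofHom ⟨fun a => ⟨e ⟨a, h a.2⟩, (he _).2 a.2⟩, by fun_prop⟩
      inv := TopCat.ofHom ⟨fun a => ⟨e.symm ⟨a, h' a.2⟩, (he _).1 (by simp)⟩, by fun_prop⟩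
      hom_inv_id := by
        ext a
        simp
      inv_hom_id := by
        ext a
        simp }
  let g : TopCat.of B ≅ TopCat.of B' := TopCat.isoOfHomeo e
  have := quasiIso_relMap h h' f.hom g.hom rfl
    (inferInstanceAs (QuasiIso (chains.mapIso f).hom))
    (inferInstanceAs (QuasiIso (chains.mapIso g).hom))
  exact rank_homology_of_quasiIso (relMap h h' f.hom g.hom rfl) d

lemma rank_rel_of_quasiIso_right (h : A ⊆ B) (h' : B ⊆ D) (hq : QuasiIso (chains.map (incl h')))
    (d : ℕ) :
    Module.rank ℚ ((rel h).homology d) = Module.rank ℚ ((rel (h.trans h')).homology d) := by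
  have : QuasiIso (chains.map (𝟙 (TopCat.of A))) := inferInstance
  have := quasiIso_relMap h (h.trans h') (𝟙 _) (incl h') rfl inferInstance hq
  exact rank_homology_of_quasiIso (relMap h (h.trans h') (𝟙 _) (incl h') rfl) d

lemma rank_rel_of_quasiIso_left (h : A ⊆ B) (h' : B ⊆ D)
    (hq : QuasiIso (chains.map (incl (h.trans h')))) (d : ℕ) :
    Module.rank ℚ ((rel h').homology (d + 1)) = Module.rank ℚ ((rel h).homology d) := by
  have hS := shortExact_cokernel_comp (chains.map (incl h)) (chains.map (incl h'))
    (chains.map (incl (h.trans h'))) (by rw [← chains.map_comp, incl_comp_incl])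
  have hz (m : ℕ) := (acyclic_rel (h.trans h') hq m).isZero_homology
  exact (hS.δIso (d + 1) d rfl (hz _) (hz _)).toLinearEquiv.rank_eq

lemma rank_rel_zero_of_quasiIso_left (h : A ⊆ B) (h' : B ⊆ D)
    (hq : QuasiIso (chains.map (incl (h.trans h')))) :
    Module.rank ℚ ((rel h').homology 0) = 0 := by
  have w : chains.map (incl (h.trans h')) ≫ 𝟙 _ = chains.map (incl h) ≫ chains.map (incl h') := by
    rw [Category.comp_id, ← chains.map_comp, incl_comp_incl]
  have hS := shortExact_cokernel_comp (chains.map (incl h)) (chains.map (incl h'))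
    (chains.map (incl (h.trans h'))) (by rw [← chains.map_comp, incl_comp_incl])
  have hz := (acyclic_rel (h.trans h') hq 0).isZero_homology
  have := hS.epi_g
  have := epi_homologyMap_of_epi_of_not_rel (cokernel.map (chains.map (incl (h.trans h')))
    (chains.map (incl h')) (chains.map (incl h)) (𝟙 _) w) 0 (by simp)
  have hz' : IsZero ((rel h').homology 0) := IsZero.of_epi (homologyMap (cokernel.map
    (chains.map (incl (h.trans h'))) (chains.map (incl h')) (chains.map (incl h)) (𝟙 _) w) 0) hz
  have := ModuleCat.subsingleton_of_isZero hz'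
  exact rank_subsingleton' ℚ _

lemma exists_subChain_eq {n : ℕ} {x : C(stdSimplex ℝ (Fin (n + 1)), X) →₀ ℚ}
    (hx : x ∈ chainsIn A n) : ∃ y, subChain A n y = x := by
  rwa [← range_subChain] at hx

lemma subChain_mem (n : ℕ) (x : ((chains.obj (TopCat.of A)).X n : Type)) :
    subChain A n x ∈ chainsIn A n := by
  rw [← range_subChain]
  exact ⟨x, rfl⟩

lemma chainsIn_inter {n : ℕ} {x : C(stdSimplex ℝ (Fin (n + 1)), X) →₀ ℚ}
    (hA : x ∈ chainsIn A n) (hB : x ∈ chainsIn B n) : x ∈ chainsIn (A ∩ B) n := by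
  intro σ hσ
  exact Set.subset_inter (hA hσ) (hB hσ)

lemma rank_rel_excision {U N : Set X} (hU : IsOpen U) (hN : IsOpen N) (d : ℕ) :
    Module.rank ℚ ((rel (Set.inter_subset_right : U ∩ N ⊆ N)).homology d) =
      Module.rank ℚ ((rel (Set.subset_union_left : U ⊆ U ∪ N)).homology d) := by
  have hiN : U ∩ N ⊆ N := Set.inter_subset_right
  have hjU : U ⊆ U ∪ N := Set.subset_union_left
  have hf : U ∩ N ⊆ U := Set.inter_subset_left
  have hg : N ⊆ U ∪ N := Set.subset_union_right
  have hsplit {n : ℕ} (w : ((chains.obj (TopCat.of ↑(U ∪ N))).X n : Type))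
      (hw : subChain (U ∪ N) n w ∈ chainsIn U n ⊔ chainsIn N n) :
      ∃ b c, w = (chains.map (incl hg)).f n b + (chains.map (incl hjU)).f n c := by
    obtain ⟨c, hc, b, hb, hbc⟩ := Submodule.mem_sup.1 hw
    obtain ⟨c, rfl⟩ := exists_subChain_eq hc
    obtain ⟨b, rfl⟩ := exists_subChain_eq hb
    refine ⟨b, c, subChain_injective _ _ ?_⟩
    rw [map_add, subChain_incl, subChain_incl, ← hbc]
    exact add_comm _ _
  have w : chains.map (incl hiN) ≫ chains.map (incl hg) =
      chains.map (incl hf) ≫ chains.map (incl hjU) := by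
    rw [← chains.map_comp, ← chains.map_comp, incl_comp_incl, incl_comp_incl]
  have : QuasiIso (relMap hiN hjU (incl hf) (incl hg) rfl) := by
    refine quasiIso_of_square (chains.map (incl hiN)) (chains.map (incl hjU))
      (chains.map (incl hg)) (cokernel.π _) (cokernel.π _) _ (exists_cokernel_π _)
      (exists_cokernel_π _) (fun _ => cokernel_π_eq_zero_iff _)
      (fun _ => cokernel_π_eq_zero_iff _) (cokernel_map_π_apply _ _ _ _ w) ?_ ?_ ?_
    · intro n b c hbc
      have h := congrArg (subChain (U ∪ N) n) hbc
      rw [subChain_incl, subChain_incl] at h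
      obtain ⟨a, ha⟩ := exists_subChain_eq
        (chainsIn_inter (h ▸ subChain_mem n c) (subChain_mem n b))
      refine ⟨a, subChain_injective _ _ ?_⟩
      rw [subChain_incl, ha]
    · intro z
      obtain ⟨y, hy, hzy⟩ := exists_sub_bdry_mem_zero hU hN (subChain_mem 0 z)
      obtain ⟨y, rfl⟩ := exists_subChain_eq hy
      rw [← subChain_d, ← map_sub] at hzy
      obtain ⟨b, c, h⟩ := hsplit _ hzy
      exact ⟨y, b, c, by rw [← h]; abel⟩
    · rintro n z ⟨b, c, hbc⟩
      have h := congrArg (subChain (U ∪ N) n) hbc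
      rw [map_add, subChain_incl, subChain_incl, subChain_d] at h
      obtain ⟨y, hy, hzy⟩ := exists_sub_bdry_mem_succ hU hN (subChain_mem (n + 1) z) (by
        rw [h]
        exact add_mem (Submodule.mem_sup_right (subChain_mem n b))
          (Submodule.mem_sup_left (subChain_mem n c)))
      obtain ⟨y, rfl⟩ := exists_subChain_eq hy
      rw [← subChain_d, ← map_sub] at hzy
      obtain ⟨b, c, h⟩ := hsplit _ hzy
      exact ⟨y, b, c, by rw [← h]; abel⟩
  exact rank_homology_of_quasiIso (relMap hiN hjU (incl hf) (incl hg) rfl) d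

lemma rank_homology_of_even (h : A ⊆ B)
    (hA : ∀ d, Odd d → Module.rank ℚ ((chains.obj (TopCat.of A)).homology d) = 0)
    (hrel : ∀ d, Odd d → Module.rank ℚ ((rel h).homology d) = 0) (d : ℕ) :
    Module.rank ℚ ((chains.obj (TopCat.of B)).homology d) =
      Module.rank ℚ ((chains.obj (TopCat.of A)).homology d) +
        Module.rank ℚ ((rel h).homology d) := by
  have hS := shortExact_pair h
  have hzero {M : ModuleCat.{0} ℚ} (hM : Module.rank ℚ M = 0) : IsZero M := by
    have := rank_zero_iff.1 hM
    exact ModuleCat.isZero_of_subsingleton M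
  have hδ (m : ℕ) : hS.δ (m + 1) m rfl = 0 := by
    rcases Nat.even_or_odd m with hm | hm
    · exact (hzero (hrel (m + 1) hm.add_one)).eq_of_src _ _
    · exact (hzero (hA m hm)).eq_of_tgt _ _
  have hmono : Mono (homologyMap (chains.map (incl h)) d) :=
    (hS.homology_exact₁ (d + 1) d rfl).mono_g (hδ d)
  have hepi : Epi (homologyMap (cokernel.π (chains.map (incl h))) d) := by
    rcases d with _ | d
    · exact epi_homologyMap_of_epi_of_not_rel _ 0 (by simp)
    · exact (hS.homology_exact₃ (d + 1) d rfl).epi_f (hδ d)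
  exact ModuleCat.free_shortExact_rank_add
    { exact := hS.homology_exact₂ d
      mono_f := hmono
      epi_g := hepi }

end Relative

end SingularChain

namespace SingularChain

open Limits HomologicalComplex

lemma isZero_chains_empty (X : Type) [TopologicalSpace X] :
    IsZero (chains.obj (TopCat.of (∅ : Set X))) := by
  rw [IsZero.iff_id_eq_zero]
  ext n x
  apply (chainsEquiv _ n).injective
  have : IsEmpty C(stdSimplex ℝ (Fin (n + 1)), TopCat.of (∅ : Set X)) :=
    ⟨fun σ => (σ (stdSimplex.vertex 0)).2⟩
  exact Subsingleton.elim _ _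

lemma rank_homology_empty (X : Type) [TopologicalSpace X] (d : ℕ) :
    Module.rank ℚ ((chains.obj (TopCat.of (∅ : Set X))).homology d) = 0 := by
  have h : IsZero ((chains.obj (TopCat.of (∅ : Set X))).homology d) :=
    (HomologicalComplex.homologyFunctor (ModuleCat ℚ) (ComplexShape.down ℕ) d).map_isZero
      (isZero_chains_empty X)
  have := ModuleCat.subsingleton_of_isZero h
  exact rank_subsingleton' ℚ _

variable {X : Type} [TopologicalSpace X]

lemma rank_rel_empty {A B : Set X} (h : A ⊆ B) (hA : A = ∅) (d : ℕ) :
    Module.rank ℚ ((rel h).homology d) =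
      Module.rank ℚ ((chains.obj (TopCat.of B)).homology d) := by
  subst hA
  have h0 : chains.map (incl h) = 0 := (isZero_chains_empty X).eq_of_src _ _
  have : IsIso (cokernel.π (chains.map (incl h))) := by
    rw [h0]
    infer_instance
  exact (rank_homology_of_quasiIso (cokernel.π (chains.map (incl h))) d).symm

lemma rank_rel_congr {A A' B B' : Set X} (h : A ⊆ B) (h' : A' ⊆ B') (hA : A = A') (hB : B = B')
    (d : ℕ) : Module.rank ℚ ((rel h).homology d) = Module.rank ℚ ((rel h').homology d) := by
  subst hA hB
  rfl

section NonzeroLocus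

variable {E ι : Type} [AddCommGroup E] [Module ℝ E] [TopologicalSpace E]

/-- The points at which one of the functionals indexed by `S` does not vanish. -/
def nonzeroLocus (φ : ι → E →L[ℝ] ℝ) (S : Finset ι) : Set E := {x | ∃ i ∈ S, φ i x ≠ 0}

/-- The points at which `φ a` has the sign of `ε` or one of the functionals indexed by `S` does
not vanish. -/
def halfLocus (φ : ι → E →L[ℝ] ℝ) (S : Finset ι) (a : ι) (ε : ℝ) : Set E :=
  {x | 0 < ε * φ a x} ∪ nonzeroLocus φ S

variable {φ : ι → E →L[ℝ] ℝ}

lemma isOpen_nonzeroLocus (S : Finset ι) : IsOpen (nonzeroLocus φ S) := by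
  have h : nonzeroLocus φ S = ⋃ i ∈ S, {x | φ i x ≠ 0} := by
    ext x
    simp [nonzeroLocus]
  rw [h]
  exact isOpen_biUnion fun i _ => isOpen_ne_fun (φ i).continuous continuous_const

lemma isOpen_halfLocus (S : Finset ι) (a : ι) (ε : ℝ) : IsOpen (halfLocus φ S a ε) :=
  (isOpen_lt continuous_const (by fun_prop)).union (isOpen_nonzeroLocus S)

lemma halfLocus_inter (S : Finset ι) (a : ι) :
    halfLocus φ S a (-1) ∩ halfLocus φ S a 1 = nonzeroLocus φ S := by
  ext x
  simp only [halfLocus, Set.mem_union, Set.mem_inter_iff, Set.mem_ofPred_eq, neg_mul, one_mul,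
    neg_pos]
  constructor
  · rintro ⟨h | h, h' | h'⟩
    · exact absurd h h'.not_gt
    all_goals assumption
  · exact fun h => ⟨Or.inr h, Or.inr h⟩

variable [DecidableEq ι]

lemma halfLocus_union (S : Finset ι) (a : ι) :
    halfLocus φ S a (-1) ∪ halfLocus φ S a 1 = nonzeroLocus φ (insert a S) := by
  ext x
  simp only [halfLocus, nonzeroLocus, Set.mem_union, Set.mem_ofPred_eq, Finset.mem_insert,
    exists_eq_or_imp, ne_iff_lt_or_gt (a := φ a x), neg_mul, one_mul, neg_pos]
  tauto

variable {e : ι → E} (he : ∀ i j, φ i (e j) = if i = j then 1 else 0)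

include he in
lemma starConvex_halfLocus {S : Finset ι} {a : ι} (ha : a ∉ S) {ε : ℝ} (hε : ε * ε = 1) :
    StarConvex ℝ (ε • e a) (halfLocus φ S a ε) := by
  intro y hy s t hs ht hst
  have h1 : ε * φ a (s • ε • e a + t • y) = s + t * (ε * φ a y) := by
    simp only [map_add, map_smul, he, if_true, smul_eq_mul, mul_one]
    linear_combination s * hε
  rcases ht.eq_or_lt with rfl | ht
  · left
    rw [Set.mem_ofPred_eq, h1]
    linarith
  · rcases hy with hy | ⟨i, hi, hy⟩
    · left
      rw [Set.mem_ofPred_eq, h1]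
      have := mul_pos ht hy
      linarith
    · right
      refine ⟨i, hi, ?_⟩
      have hia : i ≠ a := fun h => ha (h ▸ hi)
      simp only [map_add, map_smul, he, if_neg hia, smul_eq_mul, mul_zero, zero_add]
      exact mul_ne_zero ht.ne' hy

variable [ContinuousAdd E] [ContinuousSMul ℝ E]

include he in
lemma contractibleSpace_halfLocus {S : Finset ι} {a : ι} (ha : a ∉ S) {ε : ℝ} (hε : ε * ε = 1) :
    ContractibleSpace (halfLocus φ S a ε) := by
  refine (starConvex_halfLocus he ha hε).contractibleSpace ⟨ε • e a, Or.inl ?_⟩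
  simp [he, hε]

include he in
/-- The homology of a real vector space relative to the complement of a subspace of codimension
`S.card`. -/
theorem rank_rel_nonzeroLocus (S : Finset ι) (d : ℕ) :
    Module.rank ℚ ((rel (Set.subset_univ (nonzeroLocus φ S))).homology d) =
      if d = S.card then 1 else 0 := by
  have hE : ContractibleSpace (TopCat.of (Set.univ : Set E)) :=
    (starConvex_univ (0 : E) : StarConvex ℝ _ _).contractibleSpace ⟨0, trivial⟩
  induction S using Finset.induction_on generalizing d with
  | empty =>
    rw [rank_rel_empty _ (by simp [nonzeroLocus]), rank_homology_contractible, Finset.card_empty]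
  | insert a S ha ih =>
    have hneg : ContractibleSpace (TopCat.of (halfLocus φ S a (-1))) :=
      contractibleSpace_halfLocus he ha (by norm_num)
    have hpos : ContractibleSpace (TopCat.of (halfLocus φ S a 1)) :=
      contractibleSpace_halfLocus he ha (by norm_num)
    have hsub : halfLocus φ S a (-1) ⊆ nonzeroLocus φ (insert a S) := by
      rw [← halfLocus_union]
      exact Set.subset_union_left
    have hsub' : nonzeroLocus φ S ⊆ halfLocus φ S a 1 := Set.subset_union_right
    rw [Finset.card_insert_of_notMem ha]
    rcases d with _ | d
    · rw [rank_rel_zero_of_quasiIso_left hsub _ (quasiIso_of_contractible _), if_neg (by simp)]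
    · rw [rank_rel_of_quasiIso_left hsub _ (quasiIso_of_contractible _),
        rank_rel_congr hsub Set.subset_union_left rfl (halfLocus_union S a).symm,
        ← rank_rel_excision (isOpen_halfLocus S a (-1)) (isOpen_halfLocus S a 1),
        rank_rel_congr _ hsub' (halfLocus_inter S a) rfl,
        rank_rel_of_quasiIso_right hsub' (Set.subset_univ _) (quasiIso_of_contractible _), ih]
      simp

end NonzeroLocus

end SingularChain

section Projection

open scoped Matrix ComplexOrder

variable {ν κ : Type*} [Fintype ν] [DecidableEq ν] [Fintype κ] [DecidableEq κ]

/-- The orthogonal projection onto the column space of a matrix with independent columns. -/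
def orthProj (B : Matrix ν κ ℂ) : Matrix ν ν ℂ := B * (Bᴴ * B)⁻¹ * Bᴴ

/-- The matrix spanning the range of `P` whose rows selected by `f` form the identity matrix. -/
def echelon (f : κ → ν) (P : Matrix ν ν ℂ) : Matrix ν κ ℂ :=
  P.submatrix id f * (P.submatrix f f)⁻¹

omit [DecidableEq ν] in
lemma isUnit_det_gram {B : Matrix ν κ ℂ} {f : κ → ν} (hB : B.submatrix f id = 1) :
    IsUnit (Bᴴ * B).det := by
  have hinj : Function.Injective B.mulVec := by
    intro v w hvw
    have h (u : κ → ℂ) : (B *ᵥ u) ∘ f = u := by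
      conv_rhs => rw [← Matrix.one_mulVec u, ← hB]
      rfl
    rw [← h v, ← h w]
    exact congrArg (· ∘ f) hvw
  exact (Matrix.isUnit_iff_isUnit_det _).1 (Matrix.PosDef.conjTranspose_mul_self B hinj).isUnit

omit [DecidableEq ν] in
lemma orthProj_mul_self {B : Matrix ν κ ℂ} (hB : IsUnit (Bᴴ * B).det) : orthProj B * B = B := by
  rw [orthProj, Matrix.mul_assoc, Matrix.mul_assoc, Matrix.nonsing_inv_mul _ hB, Matrix.mul_one]

omit [DecidableEq ν] in
lemma orthProj_mul_orthProj {B : Matrix ν κ ℂ} (hB : IsUnit (Bᴴ * B).det) :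
    orthProj B * orthProj B = orthProj B := by
  nth_rewrite 2 [orthProj]
  rw [Matrix.mul_assoc B, ← Matrix.mul_assoc (orthProj B), orthProj_mul_self hB,
    ← Matrix.mul_assoc, orthProj]

omit [DecidableEq ν] in
lemma conjTranspose_orthProj (B : Matrix ν κ ℂ) : (orthProj B)ᴴ = orthProj B := by
  simp [orthProj, Matrix.conjTranspose_nonsing_inv, Matrix.mul_assoc]

omit [DecidableEq ν] in
lemma trace_orthProj {B : Matrix ν κ ℂ} (hB : IsUnit (Bᴴ * B).det) :
    (orthProj B).trace = Fintype.card κ := by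
  rw [orthProj, Matrix.trace_mul_comm, ← Matrix.mul_assoc, Matrix.mul_nonsing_inv _ hB,
    Matrix.trace_one]

omit [DecidableEq ν] in
lemma eq_of_mul_eq_of_trace_eq {P Q : Matrix ν ν ℂ} (hP : P * P = P) (hP' : Pᴴ = P)
    (hQ : Q * Q = Q) (hQ' : Qᴴ = Q) (hPQ : P * Q = Q) (htr : P.trace = Q.trace) : P = Q := by
  have hQP : Q * P = Q := by
    rw [← hP', ← hQ', ← Matrix.conjTranspose_mul, hPQ]
  have h : (P - Q)ᴴ * (P - Q) = P - Q := by
    rw [Matrix.conjTranspose_sub, hP', hQ', mul_sub, sub_mul, sub_mul, hP, hQ, hPQ, hQP]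
    simp
  rw [← sub_eq_zero, ← Matrix.trace_conjTranspose_mul_self_eq_zero_iff, h, Matrix.trace_sub, htr,
    sub_self]

omit [Fintype ν] [DecidableEq ν] in
lemma echelon_submatrix {f : κ → ν} {P : Matrix ν ν ℂ} (hf : (P.submatrix f f).det ≠ 0) :
    (echelon f P).submatrix f id = 1 := by
  rw [echelon, Matrix.submatrix_mul _ _ _ id _ Function.bijective_id, Matrix.submatrix_submatrix,
    Matrix.submatrix_id_id]
  exact Matrix.mul_nonsing_inv _ (isUnit_iff_ne_zero.2 hf)

omit [DecidableEq ν] in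
lemma orthProj_echelon {f : κ → ν} {P : Matrix ν ν ℂ} (hP : P * P = P) (hP' : Pᴴ = P)
    (htr : P.trace = Fintype.card κ) (hf : (P.submatrix f f).det ≠ 0) :
    orthProj (echelon f P) = P := by
  have hB := isUnit_det_gram (echelon_submatrix hf)
  have hPB : P * echelon f P = echelon f P := by
    have : P * P.submatrix id f = P.submatrix id f := by
      conv_rhs => rw [← hP]
      rfl
    rw [echelon, ← Matrix.mul_assoc, this]
  refine (eq_of_mul_eq_of_trace_eq hP hP' (orthProj_mul_orthProj hB) (conjTranspose_orthProj _)
    ?_ (htr.trans (trace_orthProj hB).symm)).symm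
  rw [orthProj, ← Matrix.mul_assoc, ← Matrix.mul_assoc, hPB]

omit [Fintype ν] [DecidableEq ν] [DecidableEq κ] in
lemma submatrix_mul_mul_conjTranspose (B : Matrix ν κ ℂ) (G : Matrix κ κ ℂ) {μ ρ : Type*}
    (s : μ → ν) (t : ρ → ν) :
    (B * G * Bᴴ).submatrix s t = B.submatrix s id * G * (B.submatrix t id)ᴴ := rfl

omit [DecidableEq ν] in
lemma orthProj_submatrix_det_ne_zero {B : Matrix ν κ ℂ} (hB : IsUnit (Bᴴ * B).det) (s : κ → ν) :
    ((orthProj B).submatrix s s).det ≠ 0 ↔ (B.submatrix s id).det ≠ 0 := by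
  have h := (Matrix.isUnit_nonsing_inv_det _ hB).ne_zero
  rw [orthProj, submatrix_mul_mul_conjTranspose, Matrix.det_mul, Matrix.det_mul,
    Matrix.det_conjTranspose]
  simp only [ne_eq, mul_eq_zero, h, star_eq_zero, or_false, or_self]

omit [DecidableEq ν] in
lemma echelon_orthProj {B : Matrix ν κ ℂ} {f : κ → ν} (hB : B.submatrix f id = 1) :
    echelon f (orthProj B) = B := by
  have hG := isUnit_det_gram hB
  rw [echelon, orthProj, submatrix_mul_mul_conjTranspose, submatrix_mul_mul_conjTranspose, hB]
  simp [Matrix.mul_assoc, Matrix.nonsing_inv_nonsing_inv _ hG, Matrix.nonsing_inv_mul _ hG]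

/-- An orthogonal projection of trace `k` has a nonvanishing principal minor of size `k`. -/
lemma exists_det_submatrix_ne_zero {P : Matrix ν ν ℂ} (hP : P * P = P) (hP' : Pᴴ = P) {k : ℕ}
    (htr : P.trace = k) :
    ∃ I : Finset ν, I.card = k ∧ (P.submatrix ((↑) : I → ν) (↑)).det ≠ 0 := by
  have hrank : P.rank = k := by
    have h : IsIdempotentElem (Matrix.toLin' P) := by
      rw [IsIdempotentElem, Module.End.mul_eq_comp, ← Matrix.toLin'_mul, hP]
    have := (LinearMap.IsIdempotentElem.isProj_range _ h).trace
    rw [Matrix.trace_toLin'_eq, htr] at this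
    exact_mod_cast this.symm
  obtain ⟨ι, a, ha, hspan, hli⟩ := exists_linearIndependent' ℂ P.row
  have : Finite ι := Finite.of_injective a ha
  have : Fintype ι := Fintype.ofFinite ι
  let I : Finset ν := Finset.univ.map ⟨a, ha⟩
  let e : ι ≃ I := Equiv.ofBijective (fun i => ⟨a i, by simp [I]⟩)
    ⟨fun i j h => ha (congrArg Subtype.val h), fun ⟨x, hx⟩ => by
      simpa [I, Subtype.ext_iff] using hx⟩
  have hI : LinearIndependent ℂ (P.submatrix ((↑) : I → ν) id).row :=
    (linearIndependent_equiv e).1 hli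
  refine ⟨I, ?_, ?_⟩
  · rw [← hrank, Matrix.rank_eq_finrank_span_row, ← hspan, finrank_span_eq_card hli]
    simp [I]
  · have hmul : P.submatrix ((↑) : I → ν) (↑) =
        P.submatrix ((↑) : I → ν) id * (P.submatrix ((↑) : I → ν) id)ᴴ := by
      conv_lhs => rw [← hP]
      nth_rewrite 2 [← hP']
      rfl
    rw [hmul]
    exact (Matrix.PosDef.mul_conjTranspose_self _ (Matrix.vecMul_injective_iff.2 hI)).det_pos.ne'

end Projection

namespace Gr

open scoped Matrix

variable {k n : ℕ} (I : Finset (Fin n))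

/-- The positions of the free entries of a reduced echelon matrix with pivot rows `I`. -/
abbrev Entry : Type := {p : Fin n × I // p.1 ∉ I}

/-- The matrix with the prescribed free entries and the identity matrix in the rows `I`. -/
def cellMatrix (z : Entry I → ℂ) : Matrix (Fin n) I ℂ :=
  fun j a => if h : j ∈ I then (if j = a then 1 else 0) else z ⟨(j, a), h⟩

variable {I}

lemma cellMatrix_submatrix (z : Entry I → ℂ) :
    (cellMatrix I z).submatrix ((↑) : I → Fin n) id = 1 := by
  ext a b
  simp [cellMatrix, Matrix.one_apply]

lemma cellMatrix_entries {B : Matrix (Fin n) I ℂ} (hB : B.submatrix ((↑) : I → Fin n) id = 1) :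
    cellMatrix I (fun p => B p.1.1 p.1.2) = B := by
  ext j a
  by_cases h : j ∈ I
  · have := congrFun (congrFun hB ⟨j, h⟩) a
    simp_all [cellMatrix, Matrix.one_apply, Subtype.ext_iff]
  · simp [cellMatrix, h]

lemma continuous_cellMatrix : Continuous (cellMatrix I) := by
  refine continuous_matrix fun j a => ?_
  unfold cellMatrix
  split_ifs <;> fun_prop

variable (k I)

/-- The projections whose principal minor at `I` does not vanish. -/
def bigCell : Set (Gr k n) := {P | (P.1.submatrix ((↑) : I → Fin n) (↑)).det ≠ 0}

variable {k I}

lemma continuous_val : Continuous (fun P : Gr k n => P.1) := continuous_subtype_val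

lemma isOpen_bigCell : IsOpen (bigCell k I) :=
  isOpen_ne_fun (continuous_val.matrix_submatrix _ _).matrix_det continuous_const

lemma continuous_orthProj_cellMatrix :
    Continuous fun z : Entry I → ℂ => orthProj (cellMatrix I z) := by
  have h := continuous_cellMatrix (I := I)
  have hG := h.matrix_conjTranspose.matrix_mul h
  have hdet (z : Entry I → ℂ) := (isUnit_det_gram (cellMatrix_submatrix z)).ne_zero
  simp only [orthProj, Matrix.inv_def, Ring.inverse_eq_inv']
  exact (h.matrix_mul ((hG.matrix_det.inv₀ hdet).smul hG.matrix_adjugate)).matrix_mul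
    h.matrix_conjTranspose

/-- The orthogonal projection spanned by a reduced echelon matrix with pivot rows `I`. -/
def cellProj (hI : I.card = k) (z : Entry I → ℂ) : Gr k n :=
  ⟨orthProj (cellMatrix I z), orthProj_mul_orthProj (isUnit_det_gram (cellMatrix_submatrix z)),
    conjTranspose_orthProj _, by
      rw [trace_orthProj (isUnit_det_gram (cellMatrix_submatrix z)), Fintype.card_coe, hI]⟩

lemma det_submatrix_orthProj_ne_zero {J : Finset (Fin n)} (e : I ≃ J) (z : Entry I → ℂ) :
    ((orthProj (cellMatrix I z)).submatrix ((↑) : J → Fin n) (↑)).det ≠ 0 ↔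
      ((cellMatrix I z).submatrix (fun a => (e a : Fin n)) id).det ≠ 0 := by
  rw [← orthProj_submatrix_det_ne_zero (isUnit_det_gram (cellMatrix_submatrix z)),
    ← Matrix.det_submatrix_equiv_self e]
  rfl

lemma cellProj_mem_bigCell (hI : I.card = k) (z : Entry I → ℂ) : cellProj hI z ∈ bigCell k I := by
  refine (det_submatrix_orthProj_ne_zero (Equiv.refl I) z).2 ?_
  simp [cellMatrix_submatrix]

/-- The coordinates of a big cell. -/
def chart (hI : I.card = k) : bigCell k I ≃ₜ (Entry I → ℂ) where
  toFun P p := echelon ((↑) : I → Fin n) P.1.1 p.1.1 p.1.2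
  invFun z := ⟨cellProj hI z, cellProj_mem_bigCell hI z⟩
  left_inv P := by
    refine Subtype.ext (Subtype.ext ?_)
    change orthProj (cellMatrix I _) = P.1.1
    obtain ⟨h1, h2, h3⟩ := P.1.2
    rw [cellMatrix_entries (echelon_submatrix P.2),
      orthProj_echelon h1 h2 (by rw [h3, Fintype.card_coe, hI]) P.2]
  right_inv z := by
    funext p
    change echelon _ (orthProj (cellMatrix I z)) p.1.1 p.1.2 = z p
    rw [echelon_orthProj (cellMatrix_submatrix z)]
    simp [cellMatrix, p.2]
  continuous_toFun := by
    have h : Continuous fun P : bigCell k I => P.1.1 := continuous_val.comp continuous_subtype_val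
    have hs := h.matrix_submatrix ((↑) : I → Fin n) ((↑) : I → Fin n)
    have hB : Continuous fun P : bigCell k I => echelon ((↑) : I → Fin n) P.1.1 := by
      simp only [echelon, Matrix.inv_def, Ring.inverse_eq_inv']
      exact (h.matrix_submatrix _ _).matrix_mul
        ((hs.matrix_det.inv₀ fun P => P.2).smul hs.matrix_adjugate)
    exact continuous_pi fun p => hB.matrix_elem _ _
  continuous_invFun :=
    (continuous_orthProj_cellMatrix.subtype_mk _).subtype_mk _

/-- A total order on subsets refining the Bruhat order, as a binary expansion. -/
def weight (I : Finset (Fin n)) : ℕ := ∑ i ∈ I, 2 ^ (i : ℕ)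

lemma weight_injective : Function.Injective (weight (n := n)) := by
  intro I J h
  refine Finset.map_injective Fin.valEmbedding (Finset.geomSum_injective le_rfl ?_)
  simpa [weight] using h

lemma exists_lt_of_weight_lt {J : Finset (Fin n)} (hcard : I.card = J.card)
    (hw : weight J < weight I) {z : Entry I → ℂ}
    (hdet : ((orthProj (cellMatrix I z)).submatrix ((↑) : J → Fin n) (↑)).det ≠ 0) :
    ∃ p : Entry I, p.1.1 < p.1.2 ∧ z p ≠ 0 := by
  by_contra! hz
  have hle {j : Fin n} {a : I} (h : cellMatrix I z j a ≠ 0) : (a : Fin n) ≤ j := by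
    by_contra! hlt
    by_cases hj : j ∈ I
    · simp [cellMatrix, hj, hlt.ne] at h
    · simp [cellMatrix, hj, hz ⟨(j, a), hj⟩ hlt] at h
  let e : I ≃ J := Finset.equivOfCardEq hcard
  rw [det_submatrix_orthProj_ne_zero e, Matrix.det_apply] at hdet
  obtain ⟨σ, -, hσ⟩ := Finset.exists_ne_zero_of_sum_ne_zero hdet
  have hprod := Finset.prod_ne_zero_iff.1 (right_ne_zero_of_smul hσ)
  refine hw.not_ge ?_
  have hJ : weight J = ∑ a : I, 2 ^ ((e (σ a) : Fin n) : ℕ) := by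
    rw [weight, ← Finset.sum_coe_sort]
    exact ((σ.trans e).sum_comp fun j : J => 2 ^ ((j : Fin n) : ℕ)).symm
  rw [hJ, weight, ← Finset.sum_coe_sort]
  exact Finset.sum_le_sum fun a _ => Nat.pow_le_pow_right two_pos (hle (hprod a (Finset.mem_univ a)))

lemma exists_weight_lt {z : Entry I → ℂ} {p : Entry I} (hp : p.1.1 < p.1.2) (hz : z p ≠ 0) :
    ∃ J : Finset (Fin n), J.card = I.card ∧ weight J < weight I ∧
      ((orthProj (cellMatrix I z)).submatrix ((↑) : J → Fin n) (↑)).det ≠ 0 := by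
  obtain ⟨⟨j, a⟩, hj⟩ := p
  simp only at hj hp
  let s : I → Fin n := Function.update (↑) a j
  have hs : Function.Injective s := by
    intro b c h
    by_cases hb : b = a <;> by_cases hc : c = a <;> simp [s, hb, hc] at h
    · rw [hb, hc]
    · exact absurd (h ▸ c.2) hj
    · exact absurd (h ▸ b.2) hj
    · exact h
  let J : Finset (Fin n) := Finset.univ.map ⟨s, hs⟩
  let e : I ≃ J := Equiv.ofBijective (fun b => ⟨s b, by simp [J]⟩)
    ⟨fun b c h => hs (congrArg Subtype.val h), fun ⟨x, hx⟩ => by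
      simpa [J, Subtype.ext_iff] using hx⟩
  refine ⟨J, by simp [J], ?_, (det_submatrix_orthProj_ne_zero e z).2 ?_⟩
  · have hJ : weight J = ∑ b : I, 2 ^ (s b : ℕ) := by simp [weight, J]
    rw [hJ, weight, ← Finset.sum_coe_sort I]
    refine Finset.sum_lt_sum (fun b _ => ?_) ⟨a, Finset.mem_univ a, ?_⟩
    · by_cases hb : b = a
      · subst hb
        simpa [s] using Nat.pow_le_pow_right two_pos hp.le
      · simp [s, hb]
    · simpa [s] using Nat.pow_lt_pow_right one_lt_two hp
  · have hrow : (cellMatrix I z).submatrix (fun b => (e b : Fin n)) id =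
        (1 : Matrix I I ℂ).updateRow a (cellMatrix I z j) := by
      ext b c
      by_cases hb : b = a
      · subst hb
        have he : (e b : Fin n) = j := Function.update_self ..
        simp [he]
      · have he : (e b : Fin n) = b := Function.update_of_ne hb ..
        rw [Matrix.updateRow_ne hb, ← cellMatrix_submatrix z]
        simp [he]
    rw [hrow, ← Matrix.cramer_transpose_apply]
    simpa [cellMatrix, hj] using hz

end Gr

namespace Gr

open SingularChain

variable {k n : ℕ} {I : Finset (Fin n)}

/-- The union of the big cells of weight less than `m`. -/
def lower (k n m : ℕ) : Set (Gr k n) :=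
  {P | ∃ J : Finset (Fin n), J.card = k ∧ weight J < m ∧ P ∈ bigCell k J}

lemma isOpen_lower (m : ℕ) : IsOpen (lower k n m) := by
  have : lower k n m = ⋃ J : {J : Finset (Fin n) // J.card = k ∧ weight J < m}, bigCell k J.1 := by
    ext P
    simp [lower, and_assoc]
  rw [this]
  exact isOpen_iUnion fun J => isOpen_bigCell

lemma lower_subset_succ (m : ℕ) : lower k n m ⊆ lower k n (m + 1) :=
  fun _ ⟨J, hJ, hw, hP⟩ => ⟨J, hJ, hw.trans (Nat.lt_succ_self m), hP⟩

lemma lower_union_bigCell (hI : I.card = k) :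
    lower k n (weight I) ∪ bigCell k I = lower k n (weight I + 1) := by
  ext P
  constructor
  · rintro (hP | hP)
    · exact lower_subset_succ _ hP
    · exact ⟨I, hI, Nat.lt_succ_self _, hP⟩
  · rintro ⟨J, hJ, hw, hP⟩
    rcases (Nat.lt_succ_iff.1 hw).lt_or_eq with hw | hw
    · exact Or.inl ⟨J, hJ, hw, hP⟩
    · exact Or.inr (weight_injective hw ▸ hP)

lemma lower_succ_of_forall_ne {m : ℕ} (h : ∀ I : Finset (Fin n), I.card = k → weight I ≠ m) :
    lower k n (m + 1) = lower k n m := by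
  refine (lower_subset_succ m).antisymm' ?_
  rintro P ⟨J, hJ, hw, hP⟩
  exact ⟨J, hJ, (Nat.lt_succ_iff.1 hw).lt_of_ne (h J hJ), hP⟩

lemma lower_zero : lower k n 0 = ∅ := by
  ext P
  simp [lower]

lemma lower_eq_univ : lower k n (weight (Finset.univ : Finset (Fin n)) + 1) = Set.univ := by
  refine Set.eq_univ_of_forall fun P => ?_
  obtain ⟨J, hJ, hdet⟩ := exists_det_submatrix_ne_zero P.2.1 P.2.2.1 P.2.2.2
  exact ⟨J, hJ, Nat.lt_succ_of_le (Finset.sum_le_sum_of_subset (Finset.subset_univ J)), hdet⟩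

/-- The real and imaginary parts of the free entries of an echelon matrix. -/
def entryPart (i : Entry I × Bool) : (Entry I → ℂ) →L[ℝ] ℝ :=
  (if i.2 then Complex.reCLM else Complex.imCLM).comp (ContinuousLinearMap.proj i.1)

/-- The basis dual to `entryPart`. -/
def entryBasis (i : Entry I × Bool) : Entry I → ℂ :=
  Pi.single i.1 (if i.2 then 1 else Complex.I)

lemma entryPart_entryBasis (i j : Entry I × Bool) :
    entryPart i (entryBasis j) = if i = j then 1 else 0 := by
  obtain ⟨p, a⟩ := i
  obtain ⟨r, b⟩ := j
  by_cases h : p = r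
  · subst h
    cases a <;> cases b <;> simp [entryPart, entryBasis]
  · simp [entryPart, entryBasis, h]

variable (I) in
/-- The positions of the free entries lying above their pivot. -/
def upperEntries : Finset (Entry I) := Finset.univ.filter fun p => p.1.1 < p.1.2

lemma mem_nonzeroLocus_entryPart (z : Entry I → ℂ) :
    z ∈ nonzeroLocus entryPart (upperEntries I ×ˢ Finset.univ) ↔
      ∃ p : Entry I, p.1.1 < p.1.2 ∧ z p ≠ 0 := by
  simp only [nonzeroLocus, Set.mem_ofPred_eq, Prod.exists, Finset.mem_product, Finset.mem_univ,
    and_true, upperEntries, Finset.mem_filter, true_and, Bool.exists_bool, ← and_or_left]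
  refine exists_congr fun p => and_congr_right fun _ => ?_
  simp only [entryPart, Bool.false_eq_true, if_false, if_true, ContinuousLinearMap.comp_apply,
    ContinuousLinearMap.proj_apply, Complex.imCLM_apply, Complex.reCLM_apply, ne_eq,
    Complex.ext_iff, Complex.zero_re, Complex.zero_im]
  tauto

lemma cellProj_mem_lower (hI : I.card = k) (z : Entry I → ℂ) :
    cellProj hI z ∈ lower k n (weight I) ↔ ∃ p : Entry I, p.1.1 < p.1.2 ∧ z p ≠ 0 := by
  constructor
  · rintro ⟨J, hJ, hw, hP⟩
    exact exists_lt_of_weight_lt (hI.trans hJ.symm) hw hP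
  · rintro ⟨p, hp, hz⟩
    obtain ⟨J, hJ, hw, hP⟩ := exists_weight_lt hp hz
    exact ⟨J, hJ.trans hI, hw, hP⟩

lemma rank_rel_lower (hI : I.card = k) (d : ℕ) :
    Module.rank ℚ ((rel (lower_subset_succ (k := k) (n := n) (weight I))).homology d) =
      if d = 2 * (upperEntries I).card then 1 else 0 := by
  have hchart (P : bigCell k I) :
      (((chart hI).trans (Homeomorph.Set.univ _).symm) P : Entry I → ℂ) ∈
        nonzeroLocus entryPart (upperEntries I ×ˢ Finset.univ) ↔
      (P : Gr k n) ∈ lower k n (weight I) ∩ bigCell k I := by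
    obtain ⟨z, rfl⟩ := (chart hI).symm.surjective P
    have h : (((chart hI).trans (Homeomorph.Set.univ _).symm) ((chart hI).symm z) : Entry I → ℂ) =
        z := (chart hI).apply_symm_apply z
    rw [h, mem_nonzeroLocus_entryPart, ← cellProj_mem_lower hI]
    exact ⟨fun h => ⟨h, cellProj_mem_bigCell hI z⟩, fun h => h.1⟩
  rw [rank_rel_congr _ Set.subset_union_left rfl (lower_union_bigCell hI).symm,
    ← rank_rel_excision (isOpen_lower _) isOpen_bigCell,
    rank_rel_of_homeomorph _ (Set.subset_univ _) _ hchart,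
    rank_rel_nonzeroLocus entryPart_entryBasis]
  simp [mul_comm]

lemma rank_homology_lower (m d : ℕ) :
    Module.rank ℚ ((chains.obj (TopCat.of (lower k n m))).homology d) =
      ((Finset.univ.filter fun I : Finset (Fin n) => I.card = k ∧ weight I < m ∧
        2 * (upperEntries I).card = d).card : Cardinal) := by
  induction m generalizing d with
  | zero =>
    rw [lower_zero, rank_homology_empty]
    simp
  | succ m ih =>
    by_cases h : ∃ I : Finset (Fin n), I.card = k ∧ weight I = m
    · obtain ⟨I, hI, rfl⟩ := h
      rw [rank_homology_of_even (lower_subset_succ (weight I)), ih, rank_rel_lower hI]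
      · have : (Finset.univ.filter fun J : Finset (Fin n) => J.card = k ∧ weight J < weight I + 1 ∧
            2 * (upperEntries J).card = d) =
            (Finset.univ.filter fun J : Finset (Fin n) => J.card = k ∧ weight J < weight I ∧
              2 * (upperEntries J).card = d) ∪
            ({I} : Finset (Finset (Fin n))).filter fun J => d = 2 * (upperEntries J).card := by
          ext J
          simp only [Finset.mem_filter, Finset.mem_univ, true_and, Finset.mem_union,
            Finset.mem_singleton, Nat.lt_succ_iff, le_iff_lt_or_eq, weight_injective.eq_iff]
          constructor
          · rintro ⟨h1, h2 | h2, h3⟩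
            · exact Or.inl ⟨h1, h2, h3⟩
            · exact Or.inr ⟨h2, h3.symm⟩
          · rintro (⟨h1, h2, h3⟩ | ⟨rfl, h3⟩)
            · exact ⟨h1, Or.inl h2, h3⟩
            · exact ⟨hI, Or.inr rfl, h3.symm⟩
        rw [this, Finset.card_union_of_disjoint, Finset.filter_singleton]
        · split_ifs <;> simp
        · refine Finset.disjoint_left.2 fun J hJ hJ' => ?_
          simp only [Finset.mem_filter, Finset.mem_singleton] at hJ hJ'
          exact hJ.2.2.1.ne (congrArg weight hJ'.1)
      · intro e he
        rw [ih, Finset.filter_false_of_mem]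
        · simp
        · rintro J - ⟨-, -, rfl⟩
          exact absurd he (by simp)
      · intro e he
        rw [rank_rel_lower hI, if_neg]
        rintro rfl
        exact absurd he (by simp)
    · push Not at h
      rw [lower_succ_of_forall_ne h, ih]
      congr 2
      ext I
      simp only [Finset.mem_filter, Finset.mem_univ, true_and]
      refine and_congr_right fun hI => and_congr_left fun _ => ?_
      have := h I hI
      lia

/-- The Betti numbers of the Grassmannian count the Schubert cells. -/
theorem betti_eq (k n d : ℕ) :
    betti (Gr k n) d =
      ((Finset.powersetCard k (Finset.univ : Finset (Fin n))).filter
        fun I => 2 * (upperEntries I).card = d).card := by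
  have hrank : Module.rank ℚ (singularHomology ℚ (Gr k n) d) =
      Module.rank ℚ ((chains.obj (TopCat.of (Set.univ : Set (Gr k n)))).homology d) :=
    (rank_homology_of_quasiIso
      (chains.map (TopCat.isoOfHomeo (Homeomorph.Set.univ (Gr k n))).hom) d).symm
  rw [betti, Module.finrank, hrank, ← lower_eq_univ, rank_homology_lower, Cardinal.toNat_natCast]
  congr 1
  ext I
  simp only [Finset.mem_filter, Finset.mem_univ, true_and, Finset.mem_powersetCard,
    Finset.subset_univ]
  refine and_congr_right fun _ => and_iff_right ?_
  exact Nat.lt_succ_of_le (Finset.sum_le_sum_of_subset (Finset.subset_univ I))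

end Gr

section QuantumBinomial

lemma pow_mul_qint (m : ℕ) {q : ℝ} (hq : q ≠ 0) :
    q ^ m * qint m q = ∑ i ∈ Finset.range m, q ^ (2 * i + 1) := by
  rw [qint, Finset.mul_sum, ← Finset.sum_range_reflect]
  refine Finset.sum_congr rfl fun i hi => ?_
  have hi := Finset.mem_range.1 hi
  rw [← zpow_natCast, ← zpow_natCast, ← zpow_add₀ hq]
  congr 1
  push_cast [Nat.cast_sub (show i ≤ m - 1 by lia), Nat.cast_sub (show 1 ≤ m by lia)]
  ring

lemma qint_ne_zero {m : ℕ} (hm : m ≠ 0) {q : ℝ} (hq : q ≠ 0) : qint m q ≠ 0 := by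
  have h : q ^ m * qint m q = q * ∑ i ∈ Finset.range m, (q ^ 2) ^ i := by
    rw [pow_mul_qint m hq, Finset.mul_sum]
    exact Finset.sum_congr rfl fun i _ => by ring
  have hpos : 0 < ∑ i ∈ Finset.range m, (q ^ 2) ^ i :=
    Finset.sum_pos (fun i _ => by positivity) (Finset.nonempty_range_iff.2 hm)
  exact right_ne_zero_of_mul (h ▸ mul_ne_zero hq hpos.ne')

lemma qint_add (a b : ℕ) {q : ℝ} (hq : q ≠ 0) :
    q ^ a * qint (a + b) q = qint b q + q ^ (a + b) * qint a q := by
  have h : q ^ (b + a) * qint (b + a) q = q ^ b * qint b q + q ^ (2 * b) * (q ^ a * qint a q) := by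
    rw [pow_mul_qint _ hq, pow_mul_qint _ hq, pow_mul_qint _ hq, Finset.sum_range_add,
      Finset.mul_sum]
    congr 1
    exact Finset.sum_congr rfl fun i _ => by ring
  refine mul_left_cancel₀ (pow_ne_zero b hq) ?_
  rw [add_comm b a] at h
  linear_combination h

lemma qfact_succ (m : ℕ) (q : ℝ) : qfact (m + 1) q = qfact m q * qint (m + 1) q :=
  Finset.prod_range_succ _ m

lemma qfact_ne_zero (m : ℕ) {q : ℝ} (hq : q ≠ 0) : qfact m q ≠ 0 :=
  Finset.prod_ne_zero_iff.2 fun i _ => qint_ne_zero i.succ_ne_zero hq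

/-- The pairs of an element of `I` and a smaller natural number not in `I`. -/
def inversions (I : Finset ℕ) : Finset (Σ _ : ℕ, ℕ) := I.sigma fun a => Finset.range a \ I

lemma card_inversions_range (k : ℕ) : (inversions (Finset.range k)).card = 0 := by
  rw [inversions, Finset.card_sigma]
  refine Finset.sum_eq_zero fun a ha => ?_
  rw [Finset.sdiff_eq_empty_iff_subset.2
    (Finset.range_subset_range.2 (Finset.mem_range.1 ha).le), Finset.card_empty]

lemma card_inversions_insert {I : Finset ℕ} {n : ℕ} (hI : I ⊆ Finset.range n) :
    (inversions (insert n I)).card = (inversions I).card + (n - I.card) := by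
  have hn : n ∉ I := fun h => Finset.notMem_range_self (hI h)
  rw [inversions, inversions, Finset.card_sigma, Finset.card_sigma, Finset.sum_insert hn, add_comm]
  congr 1
  · refine Finset.sum_congr rfl fun a ha => ?_
    rw [Finset.sdiff_insert_of_notMem]
    simpa using (Finset.mem_range.1 (hI ha)).le
  · rw [Finset.sdiff_insert_of_notMem Finset.notMem_range_self, Finset.card_sdiff_of_subset hI,
      Finset.card_range]

/-- The generating function of the number of inversions of the `k`-element subsets of
`{0, …, n - 1}`. -/
def inversionSum (k n : ℕ) (x : ℝ) : ℝ :=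
  ∑ I ∈ Finset.powersetCard k (Finset.range n), x ^ (inversions I).card

lemma inversionSum_zero (n : ℕ) (x : ℝ) : inversionSum 0 n x = 1 := by
  simp [inversionSum, inversions]

lemma inversionSum_self (k : ℕ) (x : ℝ) : inversionSum k k x = 1 := by
  have : Finset.powersetCard k (Finset.range k) = {Finset.range k} := by
    simpa using Finset.powersetCard_self (Finset.range k)
  simp [inversionSum, this, card_inversions_range]

lemma inversionSum_succ_succ (k n : ℕ) (x : ℝ) :
    inversionSum (k + 1) (n + 1) x =
      inversionSum (k + 1) n x + x ^ (n - k) * inversionSum k n x := by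
  have hsub {m : ℕ} {I : Finset ℕ} (hI : I ∈ Finset.powersetCard m (Finset.range n)) : n ∉ I :=
    fun h => Finset.notMem_range_self ((Finset.mem_powersetCard.1 hI).1 h)
  rw [inversionSum, Finset.range_add_one, Finset.powersetCard_succ_insert Finset.notMem_range_self,
    Finset.sum_union, Finset.sum_image, inversionSum, inversionSum, Finset.mul_sum]
  · congr 1
    refine Finset.sum_congr rfl fun I hI => ?_
    obtain ⟨hI, hk⟩ := Finset.mem_powersetCard.1 hI
    rw [card_inversions_insert hI, hk, pow_add, mul_comm]
  · intro I hI J hJ h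
    rw [← Finset.erase_insert (hsub hI), ← Finset.erase_insert (hsub hJ)]
    exact congrArg (Finset.erase · n) h
  · refine Finset.disjoint_left.2 fun I hI hI' => ?_
    obtain ⟨J, -, rfl⟩ := Finset.mem_image.1 hI'
    exact hsub hI (Finset.mem_insert_self n J)

lemma inversionSum_mul_qfact (k l : ℕ) {q : ℝ} (hq : q ≠ 0) :
    inversionSum k (k + l) (q ^ 2) * (qfact k q * qfact l q) = q ^ (k * l) * qfact (k + l) q := by
  induction k generalizing l with
  | zero => simp [inversionSum_zero, qfact]
  | succ k ihk =>
    induction l with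
    | zero => simp [inversionSum_self, qfact]
    | succ l ihl =>
      have hk := ihk (l + 1)
      have hadd := qint_add (k + 1) (l + 1) hq
      rw [show k + 1 + (l + 1) = k + l + 1 + 1 by ring] at hadd ⊢
      rw [show k + (l + 1) = k + l + 1 by ring] at hk
      rw [show k + 1 + l = k + l + 1 by ring] at ihl
      rw [inversionSum_succ_succ, show k + l + 1 - k = l + 1 by lia, qfact_succ (k + l + 1)]
      rw [qfact_succ l] at hk ⊢
      rw [qfact_succ k] at ihl ⊢
      linear_combination qint (l + 1) q * ihl + q ^ (2 * (l + 1)) * qint (k + 1) q * hk -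
        q ^ ((k + 1) * l) * qfact (k + l + 1) q * hadd

lemma inversionSum_eq_qbinom {k n : ℕ} (hkn : k ≤ n) {q : ℝ} (hq : q ≠ 0) :
    inversionSum k n (q ^ 2) = q ^ (n * k - k * k) * qbinom n k q := by
  obtain ⟨l, rfl⟩ := Nat.exists_eq_add_of_le hkn
  rw [qbinom, ← mul_div_assoc, eq_div_iff
    (mul_ne_zero (qfact_ne_zero _ hq) (qfact_ne_zero _ hq)), Nat.add_sub_cancel_left,
    inversionSum_mul_qfact k l hq, add_mul, Nat.add_sub_cancel_left, mul_comm l k]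

end QuantumBinomial

namespace Gr

lemma card_upperEntries {n : ℕ} (I : Finset (Fin n)) :
    (upperEntries I).card = (inversions (I.map Fin.valEmbedding)).card := by
  refine Finset.card_bij (fun p _ => ⟨p.1.2.1, p.1.1⟩) ?_ ?_ ?_
  · rintro ⟨⟨j, a⟩, hj⟩ hp
    simp only [upperEntries, Finset.mem_filter] at hp
    simp only [inversions, Finset.mem_sigma, Finset.mem_sdiff, Finset.mem_range]
    exact ⟨Finset.mem_map_of_mem _ a.2, hp.2, fun h => hj ((Finset.mem_map' _).1 h)⟩
  · rintro ⟨⟨j, a⟩, hj⟩ - ⟨⟨j', a'⟩, hj'⟩ - h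
    simp only [Sigma.mk.injEq, heq_eq_eq, Fin.val_inj, Subtype.val_inj] at h
    simp [h.1, h.2]
  · rintro ⟨a, j⟩ h
    simp only [inversions, Finset.mem_sigma, Finset.mem_map, Finset.mem_sdiff, Finset.mem_range]
      at h
    obtain ⟨⟨a, ha, rfl⟩, hja, hj⟩ := h
    have hja' : j < (a : ℕ) := hja
    refine ⟨⟨(⟨j, hja'.trans a.2⟩, ⟨a, ha⟩), fun h => hj ⟨_, h, rfl⟩⟩, ?_, rfl⟩
    exact Finset.mem_filter.2 ⟨Finset.mem_univ _, hja'⟩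

lemma sum_pow_card_upperEntries (k n : ℕ) (q : ℝ) :
    ∑ I ∈ Finset.powersetCard k (Finset.univ : Finset (Fin n)), q ^ (2 * (upperEntries I).card) =
      inversionSum k n (q ^ 2) := by
  have h : Finset.range n = Finset.univ.map (Fin.valEmbedding (n := n)) := by
    ext i
    simp
  rw [inversionSum, h, Finset.powersetCard_map, Finset.sum_map]
  refine Finset.sum_congr rfl fun I _ => ?_
  rw [card_upperEntries, pow_mul]
  rfl

end Gr

theorem poincarePoly_grassmannian (k n : ℕ) (hk : 1 ≤ k) (hkn : k ≤ n) :
    IsPoincarePoly (Gr k n) (fun q => q ^ (n * k - k * k) * qbinom n k q) := by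
  let s := Finset.powersetCard k (Finset.univ : Finset (Fin n))
  let f : Finset (Fin n) → ℕ := fun I => 2 * (Gr.upperEntries I).card
  have hf {I : Finset (Fin n)} (hI : I ∈ s) : f I < s.sup f + 1 :=
    Nat.lt_succ_of_le (Finset.le_sup hI)
  refine ⟨s.sup f + 1, fun d hd => ?_, fun q hq => ?_⟩
  · rw [Gr.betti_eq, Finset.card_eq_zero, Finset.filter_eq_empty_iff]
    intro I hI h
    exact (hf hI).not_ge (hd.trans_eq h.symm)
  · simp only [Gr.betti_eq]
    rw [← inversionSum_eq_qbinom hkn hq, ← Gr.sum_pow_card_upperEntries,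
      ← Finset.sum_fiberwise_of_maps_to (fun I hI => Finset.mem_range.2 (hf hI))]
    refine Finset.sum_congr rfl fun d _ => ?_
    rw [Finset.sum_congr rfl (g := fun _ => q ^ d)
      fun I hI => congrArg (q ^ ·) (Finset.mem_filter.1 hI).2, Finset.sum_const, nsmul_eq_mul]
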